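/- arXiv:2110.08972 — 11 statements merged into one kernel-verified Lean document; each statement's English description precedes it below -/
import Mathlib

section
/- Let q be a prime power and F a finite field with q elements. If S is an intersecting subset of GL(2,F) for the natural action on the nonzero vectors of F² (i.e., for all g, h ∈ S there is a nonzero v ∈ F² with g v = h v), then |S| ≤ q(q-1). Moreover, this bound is attained: for any nonzero x ∈ F², the stabilizer {g ∈ GL(2,F) : g x = x} is an intersecting set of size exactly q(q-1). -/
/-!
If a set `T` in a group acting on `X` is sharply transitive, then `T` is a transversal of every
point stabilizer, so `|T| |Stab x| = |G|`. If moreover `S` is intersecting, then `(t, s) ↦ t s` is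
injective on `T × S`: from `t s = t' s'` and `s x = s' x = y` one gets `t y = t' y`, so `t = t'`.
Hence `|T| |S| ≤ |G|`, and `|S| ≤ |Stab x|`.

The group `GL(n, F)` contains a set that is sharply transitive on nonzero vectors: identify `Fⁿ`
with the field extension `K` of `F` of degree `n` and let `Kˣ` act by multiplication.
-/

open MulAction Subgroup

section GroupAction

variable {G X : Type*} [Group G] [MulAction G X]

variable (X) in
/-- The set `S` is intersecting for the action on `X`: any two of its elements agree on a point. -/
def IsIntersecting (S : Set G) : Prop :=
  ∀ g ∈ S, ∀ h ∈ S, ∃ x : X, g • x = h • x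

variable (X) in
/-- The set `T` is sharply transitive (regular) on `X`: each point is carried to each point by
exactly one element of `T`. The set is not required to be a subgroup. -/
def IsSharplyTransitive (T : Set G) : Prop :=
  ∀ x y : X, ∃! t, t ∈ T ∧ t • x = y

variable {S T : Set G}

theorem isIntersecting_stabilizer (x : X) : IsIntersecting X (stabilizer G x : Set G) :=
  fun _ hg _ hh => ⟨x, hg.trans hh.symm⟩

theorem IsSharplyTransitive.isComplement_stabilizer (hT : IsSharplyTransitive X T) (x : X) :
    IsComplement T (stabilizer G x : Set G) := by
  refine isComplement_iff_existsUnique_inv_mul_mem.mpr fun g => ?_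
  obtain ⟨t, ⟨ht, htx⟩, hunique⟩ := hT x (g • x)
  have inv_mul_mem_iff (s : G) : s⁻¹ * g ∈ stabilizer G x ↔ s • x = g • x := by
    rw [mem_stabilizer_iff, mul_smul, inv_smul_eq_iff, eq_comm]
  exact ⟨⟨t, ht⟩, (inv_mul_mem_iff t).mpr htx,
    fun s hs => Subtype.ext (hunique s ⟨s.2, (inv_mul_mem_iff s).mp hs⟩)⟩

theorem IsIntersecting.injective_mul (hS : IsIntersecting X S) (hT : IsSharplyTransitive X T) :
    Function.Injective fun p : T × S => (p.1 * p.2 : G) := by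
  rintro ⟨⟨t, ht⟩, s, hs⟩ ⟨⟨t', ht'⟩, s', hs'⟩ (hmul : t * s = t' * s')
  obtain ⟨x, hx⟩ := hS s hs s' hs'
  have smul_eq : t • s • x = t' • s • x := by
    rw [← mul_smul, hmul, mul_smul, hx]
  obtain rfl : t = t' := (hT (s • x) (t' • s • x)).unique ⟨ht, smul_eq⟩ ⟨ht', rfl⟩
  obtain rfl : s = s' := mul_left_cancel hmul
  rfl

theorem IsIntersecting.card_le_card_stabilizer [Finite G] (hS : IsIntersecting X S)
    (hT : IsSharplyTransitive X T) (x : X) : Nat.card S ≤ Nat.card (stabilizer G x) := by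
  have hcompl := hT.isComplement_stabilizer x
  have : Nonempty T := hcompl.nonempty_left.to_subtype
  refine Nat.le_of_mul_le_mul_left ?_ (Nat.card_pos (α := T))
  calc Nat.card T * Nat.card S = Nat.card (T × S) := (Nat.card_prod T S).symm
    _ ≤ Nat.card G := Nat.card_le_card_of_injective _ (hS.injective_mul hT)
    _ = Nat.card T * Nat.card (stabilizer G x) := hcompl.card_mul_card.symm

theorem IsSharplyTransitive.isPretransitive (hT : IsSharplyTransitive X T) :
    IsPretransitive G X :=
  ⟨fun x y => (hT x y).exists.imp fun _ => And.right⟩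

end GroupAction

section Matrix

variable {ι R : Type*} [Fintype ι] [DecidableEq ι] [CommRing R]

theorem isIntersecting_GL_iff {S : Set (GL ι R)} :
    IsIntersecting {v : ι → R // v ≠ 0} S ↔
      ∀ g ∈ S, ∀ h ∈ S, ∃ v : ι → R, v ≠ 0 ∧ g.1.mulVec v = h.1.mulVec v := by
  simp only [IsIntersecting, Subtype.exists, Subtype.ext_iff, exists_prop, Units.smul_coe,
    Units.smul_def, Matrix.smul_eq_mulVec]

theorem coe_stabilizer_GL (x : {v : ι → R // v ≠ 0}) :
    (stabilizer (GL ι R) x : Set (GL ι R)) = {g | g.1.mulVec x.1 = x.1} :=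
  Set.ext fun _ => Subtype.ext_iff

variable {K : Type*} [DivisionRing K] [Algebra R K]

/-- The group `Kˣ` acting on `K` by left multiplication, written as matrices with respect to the
`R`-basis `b` of `K`. For finite fields this is a Singer cycle of `GL ι R`. -/
noncomputable def singerCycle (b : Module.Basis ι R K) : Subgroup (GL ι R) :=
  (Units.map (Algebra.leftMulMatrix b : K →* Matrix ι ι R)).range

theorem isSharplyTransitive_singerCycle (b : Module.Basis ι R K) :
    IsSharplyTransitive {v : ι → R // v ≠ 0} (singerCycle b : Set (GL ι R)) := by
  rintro ⟨v, hv⟩ ⟨w, hw⟩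
  obtain ⟨a, rfl⟩ := b.equivFun.surjective v
  obtain ⟨c, rfl⟩ := b.equivFun.surjective w
  have ha : a ≠ 0 := b.equivFun.map_ne_zero_iff.mp hv
  have hc : c ≠ 0 := b.equivFun.map_ne_zero_iff.mp hw
  have smul_eq_iff (u : Kˣ) :
      Units.map (Algebra.leftMulMatrix b : K →* Matrix ι ι R) u •
        (⟨b.equivFun a, hv⟩ : {v : ι → R // v ≠ 0}) = ⟨b.equivFun c, hw⟩ ↔ u * a = c := by
    rw [← b.equivFun.injective.eq_iff, Subtype.ext_iff]
    exact Eq.congr_left (Algebra.leftMulMatrix_mulVec_repr b u a)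
  refine ⟨_, ⟨⟨Units.mk0 (c / a) (div_ne_zero hc ha), rfl⟩, ?_⟩, ?_⟩
  · rw [smul_eq_iff, Units.val_mk0, div_mul_cancel₀ c ha]
  · rintro _ ⟨⟨u, rfl⟩, hu⟩
    congr 1
    exact Units.ext (eq_div_of_mul_eq ha ((smul_eq_iff u).mp hu))

end Matrix

theorem exists_isSharplyTransitive_GL (F : Type*) [Field F] [Finite F] (n : ℕ) [NeZero n] :
    ∃ T : Set (GL (Fin n) F), IsSharplyTransitive {v : Fin n → F // v ≠ 0} T := by
  obtain ⟨p, _⟩ := CharP.exists F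
  have : Fact p.Prime := ⟨CharP.char_is_prime F p⟩
  exact ⟨_, isSharplyTransitive_singerCycle
    (Module.finBasisOfFinrankEq F _ (FiniteField.finrank_extension F p n))⟩

theorem card_subtype_ne_zero (α : Type*) [Zero α] [Fintype α] :
    Nat.card {a : α // a ≠ 0} = Fintype.card α - 1 := by
  classical
  rw [Nat.card_eq_fintype_card, Fintype.card_subtype_compl, Fintype.card_subtype_eq]

section FiniteField

variable (F : Type*) [Field F] [Fintype F] (n : ℕ) [NeZero n]

theorem card_GL_eq_mul_prod_Ico :
    Nat.card (GL (Fin n) F) =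
      (Fintype.card F ^ n - 1) *
        ∏ i ∈ Finset.Ico 1 n, (Fintype.card F ^ n - Fintype.card F ^ i) := by
  rw [Matrix.card_GL_field, Fin.prod_univ_eq_prod_range (fun i => _ - Fintype.card F ^ i),
    Finset.prod_range_eq_mul_Ico _ (NeZero.pos n), pow_zero]

variable {F n} in
theorem card_stabilizer_GL (x : {v : Fin n → F // v ≠ 0}) :
    Nat.card (stabilizer (GL (Fin n) F) x) =
      ∏ i ∈ Finset.Ico 1 n, (Fintype.card F ^ n - Fintype.card F ^ i) := by
  obtain ⟨T, hT⟩ := exists_isSharplyTransitive_GL F n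
  have := hT.isPretransitive
  have index_eq : (stabilizer (GL (Fin n) F) x).index = Fintype.card F ^ n - 1 := by
    rw [index_stabilizer_of_transitive, card_subtype_ne_zero, Fintype.card_fun, Fintype.card_fin]
  have index_pos : 0 < (stabilizer (GL (Fin n) F) x).index :=
    Nat.pos_of_ne_zero index_ne_zero_of_finite
  refine Nat.eq_of_mul_eq_mul_left index_pos ?_
  rw [index_mul_card, index_eq, card_GL_eq_mul_prod_Ico]

theorem gl2_ekr_general :
    (∀ S : Set (GL (Fin n) F), IsIntersecting {v : Fin n → F // v ≠ 0} S →
      S.ncard ≤ ∏ i ∈ Finset.Ico 1 n, (Fintype.card F ^ n - Fintype.card F ^ i)) ∧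
    ∀ x : {v : Fin n → F // v ≠ 0},
      IsIntersecting {v : Fin n → F // v ≠ 0} (stabilizer (GL (Fin n) F) x : Set (GL (Fin n) F)) ∧
      (stabilizer (GL (Fin n) F) x : Set (GL (Fin n) F)).ncard =
        ∏ i ∈ Finset.Ico 1 n, (Fintype.card F ^ n - Fintype.card F ^ i) := by
  refine ⟨fun S hS => ?_, fun x => ⟨isIntersecting_stabilizer x, card_stabilizer_GL x⟩⟩
  obtain ⟨T, hT⟩ := exists_isSharplyTransitive_GL F n
  obtain ⟨x, hx⟩ := exists_ne (0 : Fin n → F)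
  exact (hS.card_le_card_stabilizer hT ⟨x, hx⟩).trans_eq (card_stabilizer_GL _)

end FiniteField

/-- **EKR property for GL(2,q).**  If `S` is an intersecting subset of `GL(2,F)` for the
natural action on the nonzero vectors of `F²`, then `|S| ≤ q(q-1)`; moreover the
stabilizer of any nonzero vector is an intersecting set of size exactly `q(q-1)`. -/
theorem gl2_ekr (q : ℕ) (hq : IsPrimePow q) (F : Type*) [Field F] [Fintype F]
    (hF : Fintype.card F = q) :
    (∀ S : Set (GL (Fin 2) F),
      (∀ g ∈ S, ∀ h ∈ S, ∃ v : Fin 2 → F, v ≠ 0 ∧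
        (g : Matrix (Fin 2) (Fin 2) F).mulVec v = (h : Matrix (Fin 2) (Fin 2) F).mulVec v) →
      S.ncard ≤ q * (q - 1)) ∧
    (∀ x : Fin 2 → F, x ≠ 0 →
      (∀ g ∈ {g : GL (Fin 2) F | (g : Matrix (Fin 2) (Fin 2) F).mulVec x = x},
        ∀ h ∈ {g : GL (Fin 2) F | (g : Matrix (Fin 2) (Fin 2) F).mulVec x = x},
          ∃ v : Fin 2 → F, v ≠ 0 ∧
            (g : Matrix (Fin 2) (Fin 2) F).mulVec v = (h : Matrix (Fin 2) (Fin 2) F).mulVec v) ∧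
      {g : GL (Fin 2) F | (g : Matrix (Fin 2) (Fin 2) F).mulVec x = x}.ncard = q * (q - 1)) := by
  subst hF
  simpa [isIntersecting_GL_iff, coe_stabilizer_GL, sq, Nat.mul_sub] using gl2_ekr_general F 2
end

section
/- Let q be a prime power and F a finite field with q elements. If S is an intersecting subset of SL(2,F) for the natural action on the nonzero vectors of F² (i.e., for all g, h ∈ S there is a nonzero v ∈ F² with g v = h v), then |S| ≤ q. Moreover, for any nonzero x ∈ F², the stabilizer {g ∈ SL(2,F) : g x = x} is an intersecting set of size exactly q. -/
/-!
Write `x ∧ y` for the determinant of the pair of plane vectors `x`, `y`. An element of `SL(2, F)`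
fixing `x ≠ 0` is a shear `v ↦ v + t (x ∧ v) x`, so the stabilizer of `x` is a copy of `F`. The
difference of the shears along `x` and `y` with parameters `s` and `t` has determinant
`-s t (x ∧ y) ^ 2`. If the two shears agree at a nonzero vector, this vanishes; when `s ≠ 0`, it
follows that `t (x ∧ y) = 0`, so the second shear fixes `x` as well. Hence all elements of an
intersecting set agree at a common nonzero vector, that is, the set lies in a coset of a stabilizer.
-/

open scoped MatrixGroups Cardinal

namespace SL2

open Matrix MulAction

section Intersecting

variable {G V : Type*} [Zero V]

variable (V) in
/-- A set of elements acting on `V` is intersecting if any two of its elements agree at a nonzero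
point of `V`. The action on nonzero vectors is encoded by the side condition `v ≠ 0`. -/
def IsIntersecting [SMul G V] (S : Set G) : Prop :=
  ∀ g ∈ S, ∀ h ∈ S, ∃ v : V, v ≠ 0 ∧ g • v = h • v

theorem isIntersecting_stabilizer [Group G] [MulAction G V] {x : V} (hx : x ≠ 0) :
    IsIntersecting V (stabilizer G x : Set G) :=
  fun _ hg _ hh => ⟨x, hx, hg.trans hh.symm⟩

end Intersecting

section ArbitraryDimension

variable {n R : Type*} [Fintype n] [DecidableEq n] [CommRing R]

theorem ext_of_forall_smul_eq {g h : Matrix.SpecialLinearGroup n R}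
    (hgh : ∀ v : n → R, g • v = h • v) : g = h :=
  Subtype.ext (ext_of_mulVec_single fun _ => hgh _)

theorem det_sub_eq_zero_of_smul_eq [IsDomain R] {g h : Matrix.SpecialLinearGroup n R} {v : n → R}
    (hv : v ≠ 0) (hgh : g • v = h • v) : (g.1 - h.1).det = 0 :=
  exists_mulVec_eq_zero_iff.mp ⟨v, hv, (sub_mulVec _ _ _).trans (sub_eq_zero_of_eq hgh)⟩

end ArbitraryDimension

section CommRing

variable {R : Type*} [CommRing R]

/-- The wedge product `x ∧ y` of two vectors of the plane, identified with a scalar: the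
determinant of the matrix with columns `x` and `y`. -/
def wedge (x y : Fin 2 → R) : R := x 0 * y 1 - x 1 * y 0

theorem wedge_self (x : Fin 2 → R) : wedge x x = 0 :=
  sub_eq_zero_of_eq (mul_comm _ _)

theorem neg_wedge (x y : Fin 2 → R) : -wedge x y = wedge y x := by
  simp only [wedge]
  ring

theorem wedge_smul_smul (g : SL(2, R)) (x y : Fin 2 → R) :
    wedge (g • x) (g • y) = wedge x y := by
  have hdet : g 0 0 * g 1 1 - g 0 1 * g 1 0 = 1 := by rw [← det_fin_two, g.det_coe]
  simp only [wedge, Matrix.SpecialLinearGroup.smul_def, smul_eq_mulVec, mulVec_fin_two,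
    cons_val_zero, cons_val_one, cons_val_fin_one]
  linear_combination (x 0 * y 1 - x 1 * y 0) * hdet

theorem eq_smul_add_smul_of_wedge_eq_one {x y : Fin 2 → R} (hxy : wedge x y = 1)
    (v : Fin 2 → R) : v = wedge v y • x + wedge x v • y := by
  simp only [wedge] at *
  ext i
  fin_cases i
  · simp only [Fin.zero_eta, Pi.add_apply, Pi.smul_apply, smul_eq_mul]
    linear_combination -v 0 * hxy
  · simp only [Fin.mk_one, Pi.add_apply, Pi.smul_apply, smul_eq_mul]
    linear_combination -v 1 * hxy

/-- The shear `v ↦ v + t (x ∧ v) x` along `x` with parameter `t`, as an element of `SL(2, R)`. -/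
def shear (x : Fin 2 → R) (t : R) : SL(2, R) :=
  ⟨!![1 - t * x 0 * x 1, t * x 0 ^ 2; -t * x 1 ^ 2, 1 + t * x 0 * x 1], by
    rw [det_fin_two_of]
    ring⟩

theorem shear_smul (x : Fin 2 → R) (t : R) (v : Fin 2 → R) :
    shear x t • v = v + (t * wedge x v) • x := by
  rw [Matrix.SpecialLinearGroup.smul_def, smul_eq_mulVec, shear, mulVec_fin_two]
  ext i
  fin_cases i <;>
  · simp only [wedge, of_apply, cons_val', cons_val_zero, cons_val_one, cons_val_fin_one,
      Fin.zero_eta, Fin.mk_one, Pi.add_apply, Pi.smul_apply, smul_eq_mul]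
    ring

theorem shear_zero (x : Fin 2 → R) : shear x 0 = 1 :=
  ext_of_forall_smul_eq fun v => by simp [shear_smul]

theorem det_shear_sub_shear (x y : Fin 2 → R) (s t : R) :
    ((shear x s).1 - (shear y t).1).det = -(s * t * wedge x y ^ 2) := by
  simp only [shear, wedge, det_fin_two, Matrix.sub_apply, of_apply, cons_val', cons_val_zero,
    cons_val_one, cons_val_fin_one]
  ring

theorem shear_smul_eq_self_of_agree [IsDomain R] {x y v : Fin 2 → R} {s t : R} (hs : s ≠ 0)
    (hv : v ≠ 0) (hagree : shear x s • v = shear y t • v) : shear y t • x = x := by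
  have hdet : s * t * wedge x y ^ 2 = 0 := by
    rw [← neg_eq_zero, ← det_shear_sub_shear, det_sub_eq_zero_of_smul_eq hv hagree]
  have hwedge : t * wedge y x = 0 := by
    simpa [hs, ← neg_wedge x y] using hdet
  rw [shear_smul, hwedge, zero_smul, add_zero]

end CommRing

section Field

variable {F : Type*} [Field F]

theorem exists_wedge_eq_one {x : Fin 2 → F} (hx : x ≠ 0) : ∃ y, wedge x y = 1 := by
  obtain ⟨i, hi⟩ := Function.ne_iff.mp hx
  fin_cases i
  · exact ⟨![0, (x 0)⁻¹], by simpa [wedge] using mul_inv_cancel₀ hi⟩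
  · exact ⟨![-(x 1)⁻¹, 0], by simpa [wedge] using mul_inv_cancel₀ hi⟩

theorem shear_injective {x : Fin 2 → F} (hx : x ≠ 0) : Function.Injective (shear x) := by
  intro s t hst
  obtain ⟨y, hxy⟩ := exists_wedge_eq_one hx
  have hsmul : y + s • x = y + t • x := by
    simpa only [shear_smul, hxy, mul_one] using congrArg (· • y) hst
  exact smul_left_injective F hx (add_left_cancel hsmul)

theorem exists_shear_eq_of_smul_eq_self {x : Fin 2 → F} (hx : x ≠ 0) {g : SL(2, F)}
    (hgx : g • x = x) : ∃ t, shear x t = g := by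
  obtain ⟨y, hxy⟩ := exists_wedge_eq_one hx
  let t := wedge (g • y) y
  have hxgy : wedge x (g • y) = 1 := by
    rw [← hxy, ← wedge_smul_smul g x y, hgx]
  have hgy : g • y = t • x + y := by
    simpa only [hxgy, one_smul] using eq_smul_add_smul_of_wedge_eq_one hxy (g • y)
  refine ⟨t, ext_of_forall_smul_eq fun v => ?_⟩
  have hv := eq_smul_add_smul_of_wedge_eq_one hxy v
  calc shear x t • v = v + (t * wedge x v) • x := shear_smul x t v
    _ = (wedge v y • x + wedge x v • y) + (t * wedge x v) • x := by rw [← hv]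
    _ = wedge v y • x + wedge x v • (t • x + y) := by module
    _ = g • (wedge v y • x + wedge x v • y) := by
      rw [smul_add g, smul_comm g, smul_comm g, hgx, hgy]
    _ = g • v := by rw [← hv]

theorem range_shear {x : Fin 2 → F} (hx : x ≠ 0) :
    Set.range (shear x) = stabilizer SL(2, F) x := by
  refine Set.Subset.antisymm ?_ fun g hg => exists_shear_eq_of_smul_eq_self hx hg
  rintro _ ⟨t, rfl⟩
  simp [shear_smul, wedge_self]

theorem mk_stabilizer {x : Fin 2 → F} (hx : x ≠ 0) : #(stabilizer SL(2, F) x) = #F := by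
  rw [← Cardinal.mk_range_eq _ (shear_injective hx), range_shear hx]
  rfl

theorem smul_eq_self_of_agree {g h : SL(2, F)} {x y v : Fin 2 → F} (hg : g ≠ 1) (hx : x ≠ 0)
    (hgx : g • x = x) (hy : y ≠ 0) (hhy : h • y = y) (hv : v ≠ 0) (hgh : g • v = h • v) :
    h • x = x := by
  obtain ⟨s, rfl⟩ := exists_shear_eq_of_smul_eq_self hx hgx
  obtain ⟨t, rfl⟩ := exists_shear_eq_of_smul_eq_self hy hhy
  have hs : s ≠ 0 := by
    rintro rfl
    exact hg (shear_zero x)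
  exact shear_smul_eq_self_of_agree hs hv hgh

theorem smul_eq_smul_of_pairwise_agree {f g h : SL(2, F)} {x y v : Fin 2 → F} (hgf : g ≠ f)
    (hx : x ≠ 0) (hgx : g • x = f • x) (hy : y ≠ 0) (hhy : h • y = f • y)
    (hv : v ≠ 0) (hgh : g • v = h • v) : h • x = f • x := by
  rw [← inv_smul_eq_iff, ← mul_smul] at hgx hhy ⊢
  refine smul_eq_self_of_agree (g := f⁻¹ * g) ?_ hx hgx hy hhy hv ?_
  · rwa [Ne, inv_mul_eq_one, eq_comm]
  · rw [mul_smul, mul_smul, hgh]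

theorem IsIntersecting.exists_forall_smul_eq {S : Set SL(2, F)}
    (hS : IsIntersecting (Fin 2 → F) S) :
    ∃ x : Fin 2 → F, x ≠ 0 ∧ ∀ g ∈ S, ∀ h ∈ S, g • x = h • x := by
  rcases S.subsingleton_or_nontrivial with hsub | ⟨g, hg, f, hf, hgf⟩
  · exact ⟨1, one_ne_zero, fun g hg h hh => by rw [hsub hg hh]⟩
  obtain ⟨x, hx, hgx⟩ := hS g hg f hf
  have hagree : ∀ h ∈ S, h • x = f • x := by
    intro h hh
    obtain ⟨y, hy, hhy⟩ := hS h hh f hf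
    obtain ⟨v, hv, hgh⟩ := hS g hg h hh
    exact smul_eq_smul_of_pairwise_agree hgf hx hgx hy hhy hv hgh
  exact ⟨x, hx, fun h hh k hk => (hagree h hh).trans (hagree k hk).symm⟩

theorem IsIntersecting.mk_le {S : Set SL(2, F)} (hS : IsIntersecting (Fin 2 → F) S) :
    #S ≤ #F := by
  rcases S.eq_empty_or_nonempty with rfl | ⟨f, hf⟩
  · simp
  obtain ⟨x, hx, hagree⟩ := hS.exists_forall_smul_eq
  have hsub : (f⁻¹ * ·) '' S ⊆ stabilizer SL(2, F) x := by
    rintro _ ⟨g, hg, rfl⟩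
    rw [SetLike.mem_coe, mem_stabilizer_iff, mul_smul, inv_smul_eq_iff]
    exact hagree g hg f hf
  calc #S = #((f⁻¹ * ·) '' S) := (Cardinal.mk_image_eq (mul_right_injective f⁻¹)).symm
    _ ≤ #(stabilizer SL(2, F) x) := Cardinal.mk_le_mk_of_subset hsub
    _ = #F := mk_stabilizer hx

end Field

end SL2

theorem sl2_ekr_general (F : Type*) [Field F] :
    (∀ S : Set SL(2, F), SL2.IsIntersecting (Fin 2 → F) S → #S ≤ #F) ∧
    ∀ x : Fin 2 → F, x ≠ 0 →
      SL2.IsIntersecting (Fin 2 → F) (MulAction.stabilizer SL(2, F) x : Set SL(2, F)) ∧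
      #(MulAction.stabilizer SL(2, F) x) = #F :=
  ⟨fun _ hS => hS.mk_le,
    fun _ hx => ⟨SL2.isIntersecting_stabilizer hx, SL2.mk_stabilizer hx⟩⟩

/-- **EKR property for SL(2,q).**  If `S` is an intersecting subset of `SL(2,F)` for the
natural action on the nonzero vectors of `F²`, then `|S| ≤ q`; moreover the stabilizer of
any nonzero vector is an intersecting set of size exactly `q`. -/
theorem sl2_ekr (q : ℕ) (hq : IsPrimePow q) (F : Type*) [Field F] [Fintype F]
    (hF : Fintype.card F = q) :
    (∀ S : Set (Matrix.SpecialLinearGroup (Fin 2) F),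
      (∀ g ∈ S, ∀ h ∈ S, ∃ v : Fin 2 → F, v ≠ 0 ∧
        (g : Matrix (Fin 2) (Fin 2) F).mulVec v = (h : Matrix (Fin 2) (Fin 2) F).mulVec v) →
      S.ncard ≤ q) ∧
    (∀ x : Fin 2 → F, x ≠ 0 →
      (∀ g ∈ {g : Matrix.SpecialLinearGroup (Fin 2) F |
                (g : Matrix (Fin 2) (Fin 2) F).mulVec x = x},
        ∀ h ∈ {g : Matrix.SpecialLinearGroup (Fin 2) F |
                (g : Matrix (Fin 2) (Fin 2) F).mulVec x = x},
          ∃ v : Fin 2 → F, v ≠ 0 ∧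
            (g : Matrix (Fin 2) (Fin 2) F).mulVec v = (h : Matrix (Fin 2) (Fin 2) F).mulVec v) ∧
      {g : Matrix.SpecialLinearGroup (Fin 2) F |
        (g : Matrix (Fin 2) (Fin 2) F).mulVec x = x}.ncard = q) := by
  obtain ⟨hle, hstab⟩ := sl2_ekr_general F
  rw [← hF, ← Nat.card_eq_fintype_card]
  exact ⟨fun S hS => Cardinal.toNat_le_toNat (hle S hS) (Cardinal.lt_aleph0_of_finite F),
    fun x hx => ⟨(hstab x hx).1, congrArg Cardinal.toNat (hstab x hx).2⟩⟩
end

section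
/- Let q be a prime power and F a finite field with q elements. There exists a subgroup H of GL(2,F) with |H| = q² − 1 such that every non-identity element of H fixes no nonzero vector of F², i.e., for every h ∈ H with h ≠ 1 and every nonzero v ∈ F², h v ≠ v. (Such an H is a Singer subgroup, and its elements form a clique of size q² − 1 in the derangement graph of GL(2,F).) -/
/-!
A degree `n` extension `K` of the finite field `F` has dimension `n` over `F`, so `Kˣ` acts
linearly and faithfully on `K ≃ Fⁿ` by multiplication. If `x * y = y` with `y ≠ 0`, then cancelling
`y` gives `x = 1`; hence the image of `Kˣ` in `GL(n, F)`, of order `|F| ^ n - 1`, acts without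
fixed points on the nonzero vectors.
-/

open Module Matrix

section LeftMul

variable {ι R S : Type*} [Fintype ι] [DecidableEq ι] [CommSemiring R] [Semiring S] [Algebra R S]

theorem leftMulMatrix_mulVec_eq_self_iff [IsRightCancelMulZero S] (b : Basis ι R S) {x : S}
    {v : ι → R} : Algebra.leftMulMatrix b x *ᵥ v = v ↔ x = 1 ∨ v = 0 := by
  obtain ⟨y, rfl⟩ := b.equivFun.surjective v
  have mulVec_coords : Algebra.leftMulMatrix b x *ᵥ b.equivFun y = b.equivFun (x * y) :=
    Algebra.leftMulMatrix_mulVec_repr b x y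
  rw [mulVec_coords, b.equivFun.injective.eq_iff, b.equivFun.map_eq_zero_iff, mul_left_eq_self₀]

/-- The regular representation of `Sˣ` in coordinates: a unit `x` is sent to the matrix of
`y ↦ x * y` with respect to the basis `b` of `S` over `R`. -/
noncomputable def unitsLeftMulMatrix (b : Basis ι R S) : Sˣ →* GL ι R :=
  Units.map (Algebra.leftMulMatrix b : S →* Matrix ι ι R)

theorem unitsLeftMulMatrix_injective (b : Basis ι R S) :
    Function.Injective (unitsLeftMulMatrix b) :=
  Units.map_injective (Algebra.leftMulMatrix_injective b)

/-- The Singer subgroup attached to a basis `b` of `S` over `R`: the image of `Sˣ` in `GL ι R` under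
the regular representation. The classical case is that of a finite field extension `S / R`. -/
noncomputable def singerSubgroup (b : Basis ι R S) : Subgroup (GL ι R) :=
  (unitsLeftMulMatrix b).range

theorem natCard_singerSubgroup_eq_natCard_units (b : Basis ι R S) :
    Nat.card (singerSubgroup b) = Nat.card Sˣ :=
  (Nat.card_congr (MonoidHom.ofInjective (unitsLeftMulMatrix_injective b)).toEquiv).symm

theorem mulVec_ne_self_of_mem_singerSubgroup [IsRightCancelMulZero S] (b : Basis ι R S)
    {h : GL ι R} (h_mem : h ∈ singerSubgroup b) (h_ne : h ≠ 1) {v : ι → R} (v_ne : v ≠ 0) :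
    (h : Matrix ι ι R) *ᵥ v ≠ v := by
  obtain ⟨x, rfl⟩ := h_mem
  intro h_fix
  have x_eq_one : (x : S) = 1 :=
    ((leftMulMatrix_mulVec_eq_self_iff b).mp h_fix).resolve_right v_ne
  exact h_ne (by rw [Units.val_eq_one.mp x_eq_one, map_one])

end LeftMul

theorem natCard_singerSubgroup {ι R D : Type*} [Fintype ι] [DecidableEq ι] [CommSemiring R]
    [DivisionSemiring D] [Algebra R D] (b : Basis ι R D) :
    Nat.card (singerSubgroup b) = Nat.card R ^ Fintype.card ι - 1 := by
  rw [natCard_singerSubgroup_eq_natCard_units, Nat.card_units,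
    Nat.card_congr b.equivFun.toEquiv, Nat.card_fun, Nat.card_eq_fintype_card (α := ι)]

theorem nonempty_basis_finiteFieldExtension (ι F : Type*) [Fintype ι] [Nonempty ι] [Field F]
    [Finite F] (p : ℕ) [Fact p.Prime] [CharP F p] :
    Nonempty (Basis ι F (FiniteField.Extension F p (Fintype.card ι))) :=
  ⟨(finBasisOfFinrankEq F _ (FiniteField.finrank_extension F p (Fintype.card ι))).reindex
    (Fintype.equivFin ι).symm⟩

theorem gl2_singer_subgroup_general (ι F : Type*) [Fintype ι] [DecidableEq ι] [Nonempty ι]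
    [Field F] [Finite F] :
    ∃ H : Subgroup (GL ι F), Nat.card H = Nat.card F ^ Fintype.card ι - 1 ∧
      ∀ h ∈ H, h ≠ 1 → ∀ v : ι → F, v ≠ 0 → (h : Matrix ι ι F) *ᵥ v ≠ v := by
  obtain ⟨p, _⟩ := CharP.exists F
  have : Fact p.Prime := ⟨CharP.char_is_prime F p⟩
  obtain ⟨b⟩ := nonempty_basis_finiteFieldExtension ι F p
  exact ⟨singerSubgroup b, natCard_singerSubgroup b,
    fun _ h_mem h_ne _ v_ne ↦ mulVec_ne_self_of_mem_singerSubgroup b h_mem h_ne v_ne⟩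

/-- **Singer subgroup of GL(2,q).**  There is a subgroup `H ≤ GL(2,F)` of order `q² - 1`
all of whose non-identity elements are derangements for the natural action on the nonzero
vectors of `F²`. -/
theorem gl2_singer_subgroup (q : ℕ) (hq : IsPrimePow q) (F : Type*) [Field F] [Fintype F]
    (hF : Fintype.card F = q) :
    ∃ H : Subgroup (GL (Fin 2) F), Nat.card H = q ^ 2 - 1 ∧
      ∀ h ∈ H, h ≠ 1 → ∀ v : Fin 2 → F, v ≠ 0 →
        (h : Matrix (Fin 2) (Fin 2) F).mulVec v ≠ v := by
  simpa only [Nat.card_eq_fintype_card, hF, Fintype.card_fin] using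
    gl2_singer_subgroup_general (Fin 2) F
end

section
/- Let q be a prime power and F a finite field with q elements. The number of derangements in GL(2,F) for its natural action on the nonzero vectors of F², i.e., the number of M ∈ GL(2,F) such that M v ≠ v for every nonzero v ∈ F², equals q⁴ − 2q³ − q² + 3q = q(q³ − 2q² − q + 3). -/
/-!
A matrix `M` is a derangement iff both `M` and `M - 1` are invertible. The matrices `M` with `M - 1`
invertible are a translate of `GL n F`, so inclusion–exclusion expresses the number of derangements
through `|GL n F|` and the number of `M` for which `M` and `M - 1` are both singular. For `n = 2`
the latter are the matrices with determinant `0` and trace `1`: they are the solutions of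
`b * c = a * (1 - a)`, a hyperbola in `(b, c)` that degenerates to two lines for `a = 0` and for
`a = 1`.
-/

open Matrix

section GeneralLinear

variable {n F : Type*} [Fintype n] [DecidableEq n] [Field F]

theorem forall_mulVec_ne_self_iff_det_sub_one_ne_zero {R : Type*} [CommRing R] [IsDomain R]
    (M : Matrix n n R) : (∀ v : n → R, v ≠ 0 → M *ᵥ v ≠ v) ↔ (M - 1).det ≠ 0 := by
  rw [Ne, ← exists_mulVec_eq_zero_iff]
  simp only [sub_mulVec, one_mulVec, sub_eq_zero, not_exists, not_and, ne_eq]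

theorem image_val_setOf_generalLinearGroup (p : Matrix n n F → Prop) :
    Units.val '' {M : GL n F | p M} = {M | M.det ≠ 0 ∧ p M} := by
  ext M
  constructor
  · rintro ⟨M, hM, rfl⟩
    exact ⟨GeneralLinearGroup.det_ne_zero M, hM⟩
  · rintro ⟨hdet, hM⟩
    exact ⟨GeneralLinearGroup.mkOfDetNeZero M hdet, hM, rfl⟩

theorem ncard_setOf_generalLinearGroup (p : Matrix n n F → Prop) :
    {M : GL n F | p M}.ncard = {M | M.det ≠ 0 ∧ p M}.ncard := by
  rw [← image_val_setOf_generalLinearGroup, Set.ncard_image_of_injective _ Units.val_injective]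

theorem ncard_setOf_det_ne_zero :
    {M : Matrix n n F | M.det ≠ 0}.ncard = Nat.card (GL n F) := by
  simpa using (ncard_setOf_generalLinearGroup (n := n) (F := F) fun _ ↦ True).symm

theorem ncard_setOf_det_sub_ne_zero (N : Matrix n n F) :
    {M : Matrix n n F | (M - N).det ≠ 0}.ncard = Nat.card (GL n F) := by
  rw [← ncard_setOf_det_ne_zero]
  exact Nat.card_congr ((Equiv.subRight N).subtypeEquiv fun _ ↦ Iff.rfl)

theorem ncard_generalLinearGroup_derangements_add [Finite F] :
    {M : GL n F | ∀ v : n → F, v ≠ 0 → M.val *ᵥ v ≠ v}.ncard + Nat.card (Matrix n n F) =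
      2 * Nat.card (GL n F) + {M : Matrix n n F | M.det = 0 ∧ (M - 1).det = 0}.ncard := by
  let A : Set (Matrix n n F) := {M | M.det ≠ 0}
  let B : Set (Matrix n n F) := {M | (M - 1).det ≠ 0}
  have derangements_eq :
      {M : GL n F | ∀ v : n → F, v ≠ 0 → M.val *ᵥ v ≠ v}.ncard = (A ∩ B).ncard := by
    simp only [forall_mulVec_ne_self_iff_det_sub_one_ne_zero]
    exact ncard_setOf_generalLinearGroup fun M : Matrix n n F ↦ (M - 1).det ≠ 0
  have both_singular_eq : {M : Matrix n n F | M.det = 0 ∧ (M - 1).det = 0} = (A ∪ B)ᶜ := by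
    ext M
    simp [A, B]
  have card_A : A.ncard = Nat.card (GL n F) := ncard_setOf_det_ne_zero
  have card_B : B.ncard = Nat.card (GL n F) := ncard_setOf_det_sub_ne_zero 1
  have inclusion_exclusion := Set.ncard_union_add_ncard_inter A B
  have card_compl := Set.ncard_add_ncard_compl (A ∪ B)
  rw [derangements_eq, both_singular_eq]
  lia

theorem cast_natCard_GL_fin (n : ℕ) [Finite F] :
    (Nat.card (GL (Fin n) F) : ℤ) =
      ∏ i : Fin n, ((Nat.card F : ℤ) ^ n - (Nat.card F : ℤ) ^ (i : ℕ)) := by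
  have := Fintype.ofFinite F
  rw [card_GL_field, Nat.cast_prod, Nat.card_eq_fintype_card]
  refine Finset.prod_congr rfl fun i _ ↦ ?_
  rw [Nat.cast_sub (Nat.pow_le_pow_right Fintype.card_pos i.is_le'), Nat.cast_pow, Nat.cast_pow]

end GeneralLinear

section ProductEquation

theorem ncard_setOf_mul_eq_of_ne_zero {G : Type*} [GroupWithZero G] {x : G} (hx : x ≠ 0) :
    {p : G × G | p.1 * p.2 = x}.ncard = ({0}ᶜ : Set G).ncard := by
  have eq_image : {p : G × G | p.1 * p.2 = x} = (fun b ↦ (b, b⁻¹ * x)) '' {0}ᶜ := by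
    ext ⟨b, c⟩
    constructor
    · rintro rfl
      have hb : b ≠ 0 := left_ne_zero_of_mul hx
      exact ⟨b, hb, by simp [hb]⟩
    · rintro ⟨b, hb, ⟨⟩⟩
      exact mul_inv_cancel_left₀ hb x
  rw [eq_image, Set.ncard_image_of_injective _ fun b c h ↦ congrArg Prod.fst h]

theorem ncard_setOf_mul_eq_zero_add_one {M : Type*} [MulZeroClass M] [NoZeroDivisors M] [Finite M] :
    {p : M × M | p.1 * p.2 = 0}.ncard + 1 = 2 * Nat.card M := by
  have eq_union : {p : M × M | p.1 * p.2 = 0} = {0} ×ˢ .univ ∪ .univ ×ˢ {0} := by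
    ext p
    simp
  have inter_eq : ({0} ×ˢ .univ ∩ .univ ×ˢ {0} : Set (M × M)) = {(0, 0)} := by
    ext p
    simp [Prod.ext_iff]
  have inclusion_exclusion :=
    Set.ncard_union_add_ncard_inter ({0} ×ˢ .univ : Set (M × M)) (.univ ×ˢ {0})
  rw [← eq_union, inter_eq, Set.ncard_prod, Set.ncard_prod, Set.ncard_univ, Set.ncard_singleton,
    Set.ncard_singleton] at inclusion_exclusion
  lia

theorem ncard_setOf_mul_eq_add_one {G : Type*} [GroupWithZero G] [Finite G] [DecidableEq G]
    (x : G) :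
    {p : G × G | p.1 * p.2 = x}.ncard + 1 = Nat.card G + if x = 0 then Nat.card G else 0 := by
  split_ifs with hx
  · rw [hx, ncard_setOf_mul_eq_zero_add_one, two_mul]
  · rw [ncard_setOf_mul_eq_of_ne_zero hx, add_zero, add_comm, ← Set.ncard_singleton (0 : G),
      Set.ncard_add_ncard_compl]

end ProductEquation

section FinTwo

theorem det_sub_one_fin_two {R : Type*} [CommRing R] (M : Matrix (Fin 2) (Fin 2) R) :
    (M - 1).det = M.det - M.trace + 1 := by
  simp only [det_fin_two, trace_fin_two, Matrix.sub_apply, one_apply_eq,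
    one_apply_ne zero_ne_one, one_apply_ne one_ne_zero]
  ring

theorem det_and_det_sub_one_eq_zero_iff_fin_two {R : Type*} [CommRing R]
    (M : Matrix (Fin 2) (Fin 2) R) :
    M.det = 0 ∧ (M - 1).det = 0 ↔ M.trace = 1 ∧ M.det = 0 := by
  rw [det_sub_one_fin_two]
  grind

/-- A `2 × 2` matrix with trace `t` and determinant `d` is given by its upper left entry `a` and a
pair `(b, c)` of off-diagonal entries with product `a * (t - a) - d`. -/
def finTwoTraceDetEquiv {R : Type*} [CommRing R] (t d : R) :
    {M : Matrix (Fin 2) (Fin 2) R // M.trace = t ∧ M.det = d} ≃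
      Σ a : R, {p : R × R // p.1 * p.2 = a * (t - a) - d} where
  toFun M := ⟨M.1 0 0, (M.1 0 1, M.1 1 0), by
    obtain ⟨M, rfl, rfl⟩ := M
    simp only [trace_fin_two, det_fin_two]
    ring⟩
  invFun x := ⟨!![x.1, x.2.1.1; x.2.1.2, t - x.1], by simp [trace_fin_two], by
    rw [det_fin_two_of, x.2.2]
    ring⟩
  left_inv := by
    rintro ⟨M, rfl, rfl⟩
    ext i j
    fin_cases i <;> fin_cases j <;> simp [trace_fin_two]
  right_inv _ := rfl

theorem ncard_fin_two_trace_eq_and_det_eq_sum {R : Type*} [CommRing R] [Fintype R] (t d : R) :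
    {M : Matrix (Fin 2) (Fin 2) R | M.trace = t ∧ M.det = d}.ncard =
      ∑ a : R, {p : R × R | p.1 * p.2 = a * (t - a) - d}.ncard :=
  (Nat.card_congr (finTwoTraceDetEquiv t d)).trans Nat.card_sigma

variable {F : Type*} [Field F] [Finite F]

theorem ncard_fin_two_trace_eq_and_det_eq_add (t d : F) :
    {M : Matrix (Fin 2) (Fin 2) F | M.trace = t ∧ M.det = d}.ncard + Nat.card F =
      Nat.card F ^ 2 + Nat.card F * {a : F | a * (t - a) = d}.ncard := by
  classical
  have := Fintype.ofFinite F
  calc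
    _ = ∑ a : F, ({p : F × F | p.1 * p.2 = a * (t - a) - d}.ncard + 1) := by
      simp [ncard_fin_two_trace_eq_and_det_eq_sum, Finset.sum_add_distrib]
    _ = ∑ a : F, (Nat.card F + if a * (t - a) = d then Nat.card F else 0) := by
      simp only [ncard_setOf_mul_eq_add_one, sub_eq_zero]
    _ = _ := by
      simp [Finset.sum_add_distrib, ← Finset.sum_filter, Set.ncard_eq_toFinset_card', sq, mul_comm]

theorem ncard_fin_two_trace_eq_one_and_det_eq_zero :
    {M : Matrix (Fin 2) (Fin 2) F | M.trace = 1 ∧ M.det = 0}.ncard =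
      Nat.card F ^ 2 + Nat.card F := by
  have roots_eq : {a : F | a * (1 - a) = 0} = {0, 1} := by
    ext a
    simp [sub_eq_zero, eq_comm (a := a)]
  have count := ncard_fin_two_trace_eq_and_det_eq_add (1 : F) 0
  rw [roots_eq, Set.ncard_pair zero_ne_one] at count
  lia

end FinTwo

/-- **Number of derangements of GL(2,q).**  The number of elements of `GL(2,F)` fixing
no nonzero vector of `F²` is `q⁴ - 2q³ - q² + 3q`. -/
theorem gl2_derangement_count (q : ℕ) (hq : IsPrimePow q) (F : Type*) [Field F] [Fintype F]
    (hF : Fintype.card F = q) :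
    ({M : GL (Fin 2) F | ∀ v : Fin 2 → F, v ≠ 0 →
        (M : Matrix (Fin 2) (Fin 2) F).mulVec v ≠ v}.ncard : ℤ) =
      (q : ℤ) ^ 4 - 2 * (q : ℤ) ^ 3 - (q : ℤ) ^ 2 + 3 * (q : ℤ) := by
  have card_F : Nat.card F = q := by rw [Nat.card_eq_fintype_card, hF]
  have card_matrix : Nat.card (Matrix (Fin 2) (Fin 2) F) = q ^ 4 := by
    simp [Matrix, ← card_F, ← pow_mul]
  have count := ncard_generalLinearGroup_derangements_add (n := Fin 2) (F := F)
  simp only [det_and_det_sub_one_eq_zero_iff_fin_two, ncard_fin_two_trace_eq_one_and_det_eq_zero,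
    card_matrix, card_F] at count
  have card_GL := cast_natCard_GL_fin (F := F) 2
  rw [card_F, Fin.prod_univ_two, Fin.val_zero, Fin.val_one] at card_GL
  zify at count
  linear_combination count + 2 * card_GL
end

section
/- Let q be a prime power and F a finite field with q elements. For nonzero x, y ∈ F², let v_{x,y} : GL(2,F) → ℂ be the function with v_{x,y}(g) = 1 if g x = y and v_{x,y}(g) = 0 otherwise. If S ⊆ GL(2,F) is an intersecting set of maximum size |S| = q(q−1), then the indicator function of S lies in the ℂ-linear span of the vectors {v_{x,y} : x, y ∈ F² \ {0}}. (GL(2,F) has the EKR-module property.) -/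
/-!
The elements of an intersecting set `S` in `GL(2,F)` pairwise differ by matrices of rank at most
one. Two maps of rank one whose difference has rank at most one share their kernel or their range,
and if two equivalence relations together relate every pair, then one of them already does. Hence
either all elements of `S` agree on a nonzero vector, or some nonzero row vector `y` has the same
image `z` under right multiplication by every element of `S`.

Counting with the orbit-stabiliser theorem, `S` is then all of `{g | g x = y}` or all of
`{g | y g = z}`. In the second case, the number of `v` with `y ⬝ᵥ (g v) = z ⬝ᵥ v` is the size of the
kernel of `y g - z`, so it takes one value on `S` and another value off `S`; on the other hand it is
a sum over `v` of functions of `g v`, and so lies in the span.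
-/

open Matrix Module

section EquivalenceRelations

theorem setoid_eq_top_or_eq_top {α : Type*} {r s : Setoid α} (h : ∀ a b, r a b ∨ s a b) :
    r = ⊤ ∨ s = ⊤ := by
  by_contra! hne
  simp only [ne_eq, Setoid.eq_top_iff, not_forall] at hne
  obtain ⟨⟨a, b, hr⟩, c, d, hs⟩ := hne
  have hab : s a b := (h a b).resolve_left hr
  have hcd : r c d := (h c d).resolve_right hs
  grind [h a c, h a d, h b c, h b d, Setoid.trans', Setoid.symm']

end EquivalenceRelations

section RankOne

variable {K V W : Type*} [DivisionRing K] [AddCommGroup V] [Module K V] [AddCommGroup W]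
  [Module K W]

theorem eq_span_singleton_of_rank_le_one {p : Submodule K V} (hp : Module.rank K p ≤ 1) {v : V}
    (hv : v ∈ p) (hv0 : v ≠ 0) : p = K ∙ v := by
  obtain ⟨w, hpw⟩ := (rank_submodule_le_one_iff' p).1 hp
  have hw : w ≠ 0 := by
    rintro rfl
    exact hv0 (by simpa using hpw hv)
  have hle : K ∙ v ≤ p := (Submodule.span_singleton_le_iff_mem v p).2 hv
  have hvw : K ∙ v = K ∙ w := ((nonzero_span_atom w hw).le_iff.1 (hle.trans hpw)).resolve_left
    (mt Submodule.span_singleton_eq_bot.1 hv0)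
  exact le_antisymm (hpw.trans hvw.ge) hle

theorem ker_eq_of_ker_le_of_rank_le_one {f g : V →ₗ[K] W} (hf : f.rank ≤ 1) (hg : g ≠ 0)
    (hfg : f.ker ≤ g.ker) : f.ker = g.ker := by
  refine hfg.antisymm fun x hgx => ?_
  by_contra hfx
  refine hg (LinearMap.ext fun v => ?_)
  have hv : f v ∈ K ∙ f x :=
    eq_span_singleton_of_rank_le_one hf ⟨x, rfl⟩ hfx ▸ LinearMap.mem_range_self f v
  obtain ⟨c, hc⟩ := Submodule.mem_span_singleton.1 hv
  have hker : v - c • x ∈ f.ker := by simp [hc]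
  simpa [LinearMap.mem_ker.1 hgx] using hfg hker

theorem ker_eq_or_range_eq_of_rank_sub_le_one {f g : V →ₗ[K] W} (hf0 : f ≠ 0) (hg0 : g ≠ 0)
    (hf : f.rank ≤ 1) (hg : g.rank ≤ 1) (hfg : (f - g).rank ≤ 1) :
    f.ker = g.ker ∨ f.range = g.range := by
  rw [or_iff_not_imp_left]
  intro hne
  obtain ⟨x, hfx, hgx⟩ := SetLike.not_le_iff_exists.1
    (mt (ker_eq_of_ker_le_of_rank_le_one hf hg0) hne)
  obtain ⟨y, hgy, hfy⟩ := SetLike.not_le_iff_exists.1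
    (mt (ker_eq_of_ker_le_of_rank_le_one hg hf0) (Ne.symm hne))
  rw [LinearMap.mem_ker] at hfx hgx hgy hfy
  have hgx' : g x ∈ (f - g).range := ⟨-x, by simp [hfx]⟩
  have hfy' : f y ∈ (f - g).range := ⟨y, by simp [hgy]⟩
  calc f.range = K ∙ f y := eq_span_singleton_of_rank_le_one hf ⟨y, rfl⟩ hfy
    _ = (f - g).range := (eq_span_singleton_of_rank_le_one hfg hfy' hfy).symm
    _ = K ∙ g x := eq_span_singleton_of_rank_le_one hfg hgx' hgx
    _ = g.range := (eq_span_singleton_of_rank_le_one hg ⟨x, rfl⟩ hgx).symm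

theorem forall_ker_sub_eq_or_forall_range_sub_eq {T : Set (V →ₗ[K] W)}
    (hT : ∀ f ∈ T, ∀ g ∈ T, (f - g).rank ≤ 1) {f₀ f₁ : V →ₗ[K] W} (hf₀ : f₀ ∈ T) (hf₁ : f₁ ∈ T)
    (hne : f₁ ≠ f₀) :
    (∀ f ∈ T, f ≠ f₀ → (f - f₀).ker = (f₁ - f₀).ker) ∨
      (∀ f ∈ T, f ≠ f₀ → (f - f₀).range = (f₁ - f₀).range) := by
  let r : Setoid {f // f ∈ T ∧ f ≠ f₀} := Setoid.ker fun f => (f.1 - f₀).ker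
  let s : Setoid {f // f ∈ T ∧ f ≠ f₀} := Setoid.ker fun f => (f.1 - f₀).range
  have hrs : ∀ f g, r f g ∨ s f g := fun ⟨f, hf, hf'⟩ ⟨g, hg, hg'⟩ =>
    ker_eq_or_range_eq_of_rank_sub_le_one (sub_ne_zero.2 hf') (sub_ne_zero.2 hg')
      (hT f hf f₀ hf₀) (hT g hg f₀ hf₀) (by simpa using hT f hf g hg)
  refine (setoid_eq_top_or_eq_top hrs).imp ?_ ?_ <;>
    exact fun h f hf hf' => Setoid.eq_top_iff.1 h ⟨f, hf, hf'⟩ ⟨f₁, hf₁, hne⟩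

theorem exists_ne_zero_apply_eq_zero_of_rank_le_one {f : V →ₗ[K] W} (hV : 1 < Module.rank K V)
    (hf : f.rank ≤ 1) : ∃ x ≠ 0, f x = 0 := by
  by_contra! h
  have hinj : Function.Injective f.rangeRestrict :=
    (injective_iff_map_eq_zero _).2 fun x hx => by
      by_contra hx0
      exact h x hx0 (congrArg Subtype.val hx)
  have hle := LinearMap.lift_rank_le_of_injective f.rangeRestrict hinj
  have : Module.rank K V ≤ 1 := by
    simpa using hle.trans (Cardinal.lift_le.2 hf)
  exact this.not_gt hV

theorem exists_ne_zero_comp_eq_zero_of_rank_le_one {f : V →ₗ[K] W} (hW : 1 < Module.rank K W)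
    (hf : f.rank ≤ 1) : ∃ φ : W →ₗ[K] K, φ ≠ 0 ∧ φ ∘ₗ f = 0 := by
  have hlt : f.range < ⊤ := by
    refine lt_top_iff_ne_top.2 fun htop => (hf.trans_lt hW).ne ?_
    rw [LinearMap.rank, htop, rank_top]
  obtain ⟨φ, hφ, hker⟩ := Submodule.exists_le_ker_of_lt_top _ hlt
  exact ⟨φ, hφ, LinearMap.range_le_ker_iff.1 hker⟩

theorem exists_forall_apply_eq_or_exists_forall_comp_eq (hV : 1 < Module.rank K V)
    (hW : 1 < Module.rank K W) {T : Set (V →ₗ[K] W)} (hT : ∀ f ∈ T, ∀ g ∈ T, (f - g).rank ≤ 1) :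
    (∃ x ≠ 0, ∀ f ∈ T, ∀ g ∈ T, f x = g x) ∨
      (∃ φ : W →ₗ[K] K, φ ≠ 0 ∧ ∀ f ∈ T, ∀ g ∈ T, φ ∘ₗ f = φ ∘ₗ g) := by
  rcases T.subsingleton_or_nontrivial with hsub | ⟨f₀, hf₀, f₁, hf₁, hne⟩
  · obtain ⟨x, hx⟩ := rank_pos_iff_exists_ne_zero.1 (zero_lt_one.trans hV)
    exact .inl ⟨x, hx, fun f hf g hg => by rw [hsub hf hg]⟩
  refine (forall_ker_sub_eq_or_forall_range_sub_eq hT hf₀ hf₁ hne.symm).imp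
    (fun hker => ?_) (fun hrange => ?_)
  · obtain ⟨x, hx, hx₁⟩ := exists_ne_zero_apply_eq_zero_of_rank_le_one hV (hT f₁ hf₁ f₀ hf₀)
    have hx₀ : ∀ f ∈ T, f x = f₀ x := fun f hf => by
      by_cases hff₀ : f = f₀
      · rw [hff₀]
      · have : x ∈ (f - f₀).ker := hker f hf hff₀ ▸ hx₁
        exact sub_eq_zero.1 this
    exact ⟨x, hx, fun f hf g hg => (hx₀ f hf).trans (hx₀ g hg).symm⟩
  · obtain ⟨φ, hφ, hφ₁⟩ := exists_ne_zero_comp_eq_zero_of_rank_le_one hW (hT f₁ hf₁ f₀ hf₀)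
    have hφ₀ : ∀ f ∈ T, φ ∘ₗ f = φ ∘ₗ f₀ := fun f hf => by
      by_cases hff₀ : f = f₀
      · rw [hff₀]
      · rw [← sub_eq_zero, ← LinearMap.comp_sub, ← LinearMap.range_le_ker_iff, hrange f hf hff₀]
        exact LinearMap.range_le_ker_iff.2 hφ₁
    exact ⟨φ, hφ, fun f hf g hg => (hφ₀ f hf).trans (hφ₀ g hg).symm⟩

end RankOne

section RankOneMatrices

theorem one_lt_rank_fun {K ι : Type*} [DivisionRing K] [Finite ι] [Nontrivial ι] :
    1 < Module.rank K (ι → K) := by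
  cases nonempty_fintype ι
  rw [rank_fun']
  exact_mod_cast Fintype.one_lt_card

variable {K m n : Type*} [Field K] [Fintype n]

theorem rank_lt_card_of_mulVec_eq_zero {A : Matrix m n K} {v : n → K} (hv : v ≠ 0)
    (hAv : A *ᵥ v = 0) : A.rank < Fintype.card n := by
  have hpos : 0 < finrank K A.mulVecLin.ker := by
    rw [finrank_pos_iff_exists_ne_zero]
    exact ⟨⟨v, hAv⟩, fun h => hv (congrArg Subtype.val h)⟩
  have := A.mulVecLin.finrank_range_add_finrank_ker
  rw [finrank_fintype_fun_eq_card] at this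
  rw [Matrix.rank]
  lia

theorem exists_forall_mulVec_eq_or_exists_forall_vecMul_eq [Fintype m] [Nontrivial m] [Nontrivial n]
    {T : Set (Matrix m n K)} (hT : ∀ A ∈ T, ∀ B ∈ T, (A - B).rank ≤ 1) :
    (∃ x ≠ 0, ∀ A ∈ T, ∀ B ∈ T, A *ᵥ x = B *ᵥ x) ∨
      (∃ y ≠ 0, ∀ A ∈ T, ∀ B ∈ T, y ᵥ* A = y ᵥ* B) := by
  classical
  have hrank : ∀ f ∈ toLin' '' T, ∀ g ∈ toLin' '' T, (f - g).rank ≤ 1 := by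
    rintro _ ⟨A, hA, rfl⟩ _ ⟨B, hB, rfl⟩
    rw [← map_sub, LinearMap.rank, ← finrank_eq_rank]
    exact_mod_cast hT A hA B hB
  refine (exists_forall_apply_eq_or_exists_forall_comp_eq one_lt_rank_fun one_lt_rank_fun
    hrank).imp ?_ ?_
  · rintro ⟨x, hx, h⟩
    exact ⟨x, hx, fun A hA B hB => h _ ⟨A, hA, rfl⟩ _ ⟨B, hB, rfl⟩⟩
  · rintro ⟨φ, hφ, h⟩
    obtain ⟨y, rfl⟩ := (dotProductEquiv K m).surjective φ
    refine ⟨y, by simpa using hφ, fun A hA B hB => dotProduct_eq _ _ fun v => ?_⟩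
    rw [← dotProduct_mulVec, ← dotProduct_mulVec]
    exact LinearMap.congr_fun (h _ ⟨A, hA, rfl⟩ _ ⟨B, hB, rfl⟩) v

end RankOneMatrices

section Counting

theorem ncard_smul_eq_mul_ncard_orbit {G X : Type*} [Group G] [MulAction G X] {x y : X}
    (hy : y ∈ MulAction.orbit G x) :
    {g : G | g • x = y}.ncard * (MulAction.orbit G x).ncard = Nat.card G := by
  obtain ⟨h, rfl⟩ := hy
  have hcoset : {g : G | g • x = h • x} = (h * ·) '' (MulAction.stabilizer G x : Set G) := by
    ext g
    simp [MulAction.mem_stabilizer_iff, mul_smul, inv_smul_eq_iff]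
  rw [hcoset, Set.ncard_image_of_injective _ (mul_right_injective h), ← MulAction.index_stabilizer]
  exact (MulAction.stabilizer G x).card_mul_index

theorem exists_linearEquiv_apply_eq {K V : Type*} [DivisionRing K] [AddCommGroup V] [Module K V]
    {x y : V} (hx : x ≠ 0) (hy : y ≠ 0) : ∃ e : V ≃ₗ[K] V, e x = y := by
  obtain ⟨e, he⟩ := Submodule.exists_linearEquiv_restrict_eq
    ((LinearEquiv.toSpanNonzeroSingleton K V x hx).symm ≪≫ₗ
      LinearEquiv.toSpanNonzeroSingleton K V y hy)
  refine ⟨e, ?_⟩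
  have hcoord := LinearEquiv.coord_self K V x hx
  simpa [hcoord] using (he ⟨x, Submodule.mem_span_singleton_self x⟩).symm

variable {F n : Type*} [Field F] [Fintype n] [DecidableEq n]

theorem orbit_GL_eq_compl_zero {x : n → F} (hx : x ≠ 0) : MulAction.orbit (GL n F) x = {0}ᶜ := by
  ext y
  constructor
  · rintro ⟨g, rfl⟩
    exact (smul_ne_zero_iff_ne g).2 hx
  · intro hy
    obtain ⟨e, he⟩ := exists_linearEquiv_apply_eq (K := F) hx hy
    refine ⟨GeneralLinearGroup.toLin.symm (LinearMap.GeneralLinearGroup.ofLinearEquiv e), ?_⟩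
    rw [← he]
    exact LinearMap.toMatrix'_mulVec (e : (n → F) →ₗ[F] n → F) x

theorem ncard_GL_mulVec_eq_mul_le [Finite F] {x : n → F} (hx : x ≠ 0) (y : n → F) :
    {g : GL n F | (g : Matrix n n F) *ᵥ x = y}.ncard * (Nat.card F ^ Fintype.card n - 1) ≤
      Nat.card (GL n F) := by
  by_cases hy : y ∈ MulAction.orbit (GL n F) x
  · have horbit : (MulAction.orbit (GL n F) x).ncard = Nat.card F ^ Fintype.card n - 1 := by
      rw [orbit_GL_eq_compl_zero hx, Set.ncard_compl]
      simp [Nat.card_fun]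
    exact (horbit ▸ ncard_smul_eq_mul_ncard_orbit hy).le
  · have hempty : {g : GL n F | (g : Matrix n n F) *ᵥ x = y} = ∅ :=
      Set.eq_empty_of_forall_notMem fun g hg => hy ⟨g, hg⟩
    simp [hempty]

variable [Fintype F]

theorem ncard_GL_two_mulVec_eq_le {x : Fin 2 → F} (hx : x ≠ 0) (y : Fin 2 → F) :
    {g : GL (Fin 2) F | (g : Matrix (Fin 2) (Fin 2) F) *ᵥ x = y}.ncard ≤
      Fintype.card F * (Fintype.card F - 1) := by
  have hle := ncard_GL_mulVec_eq_mul_le hx y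
  rw [card_GL_field] at hle
  have hpos : 0 < Fintype.card F ^ 2 - 1 := by
    have := Nat.one_lt_pow two_ne_zero (Fintype.one_lt_card (α := F))
    lia
  refine Nat.le_of_mul_le_mul_right (hle.trans_eq ?_) (by simpa using hpos)
  simp [Fin.prod_univ_two, Nat.mul_sub, sq, mul_comm]

theorem ncard_GL_two_vecMul_eq_le {y : Fin 2 → F} (hy : y ≠ 0) (z : Fin 2 → F) :
    {g : GL (Fin 2) F | y ᵥ* (g : Matrix (Fin 2) (Fin 2) F) = z}.ncard ≤
      Fintype.card F * (Fintype.card F - 1) := by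
  let transpose (g : GL (Fin 2) F) : GL (Fin 2) F :=
    GeneralLinearGroup.mkOfDetNeZero gᵀ (by simpa using g.det_ne_zero)
  refine (Set.ncard_le_ncard_of_injOn transpose (fun g hg => ?_) (fun g _ h _ hgh => ?_)
    (Set.toFinite _)).trans (ncard_GL_two_mulVec_eq_le hy z)
  · exact (mulVec_transpose _ y).trans hg
  · exact Units.ext (transpose_injective (congrArg Units.val hgh))

theorem card_filter_dotProduct_eq_zero [DecidableEq F] [Nonempty n] (w : n → F) :
    (Finset.univ.filter fun v : n → F => w ⬝ᵥ v = 0).card =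
      Fintype.card F ^ (Fintype.card n - 1) +
        if w = 0 then Fintype.card F ^ (Fintype.card n - 1) * (Fintype.card F - 1) else 0 := by
  obtain ⟨k, hk⟩ := Nat.exists_eq_add_one.2 (Fintype.card_pos (α := n))
  split_ifs with hw
  · obtain ⟨c, hc⟩ := Nat.exists_eq_add_one.2 (Fintype.card_pos (α := F))
    simp only [hw, zero_dotProduct, Finset.filter_true, Finset.card_univ, Fintype.card_fun, hk, hc,
      Nat.add_sub_cancel]
    ring
  · have hφ : dotProductEquiv F n w ≠ 0 := by simpa using hw
    have hrank := Dual.finrank_ker_add_one_of_ne_zero hφ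
    rw [finrank_fintype_fun_eq_card, hk, Nat.add_right_cancel_iff] at hrank
    have hcard := Module.natCard_eq_pow_finrank (K := F) (V := (dotProductEquiv F n w).ker)
    rw [hk, add_zero, Nat.add_sub_cancel, ← Nat.card_eq_fintype_card, ← hrank, ← hcard,
      ← Fintype.card_subtype, ← Nat.card_eq_fintype_card]
    rfl

end Counting

section CanonicalSpan

variable (R n F : Type*) [Ring R] [Fintype n] [DecidableEq n] [Field F]

/-- The `R`-span of the characteristic vectors `v_{x,y}` of the canonical intersecting sets
`{g | g x = y}`, with `x` and `y` nonzero, inside the functions on `GL n F`. -/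
def canonicalSpan : Submodule R (GL n F → R) :=
  Submodule.span R {f | ∃ x y : n → F, x ≠ 0 ∧ y ≠ 0 ∧
    f = Set.indicator {g : GL n F | (g : Matrix n n F).mulVec x = y} (fun _ => (1 : R))}

variable {R n F}

theorem mulVec_ne_zero_of_GL (g : GL n F) {x : n → F} (hx : x ≠ 0) :
    (g : Matrix n n F) *ᵥ x ≠ 0 :=
  (smul_ne_zero_iff_ne g).2 hx

theorem indicator_mulVec_eq_mem_canonicalSpan {x : n → F} (hx : x ≠ 0) (y : n → F) :
    Set.indicator {g : GL n F | (g : Matrix n n F) *ᵥ x = y} (fun _ => (1 : R)) ∈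
      canonicalSpan R n F := by
  by_cases hy : y = 0
  · have hempty : {g : GL n F | (g : Matrix n n F) *ᵥ x = y} = ∅ :=
      Set.eq_empty_of_forall_notMem fun g hg => mulVec_ne_zero_of_GL g hx (hg.trans hy)
    rw [hempty, Set.indicator_empty]
    exact Submodule.zero_mem _
  · exact Submodule.subset_span ⟨x, y, hx, hy, rfl⟩

theorem comp_mulVec_mem_canonicalSpan_of_ne_zero [Finite F] {x : n → F} (hx : x ≠ 0)
    (φ : (n → F) → R) :
    (fun g : GL n F => φ ((g : Matrix n n F) *ᵥ x)) ∈ canonicalSpan R n F := by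
  classical
  have := Fintype.ofFinite F
  have hsum : (fun g : GL n F => φ ((g : Matrix n n F) *ᵥ x)) =
      ∑ y, φ y • Set.indicator {g : GL n F | (g : Matrix n n F) *ᵥ x = y} (fun _ => (1 : R)) := by
    ext g
    simp [Set.indicator_apply]
  rw [hsum]
  exact Submodule.sum_mem _ fun y _ =>
    Submodule.smul_mem _ _ (indicator_mulVec_eq_mem_canonicalSpan hx y)

variable [Nonempty n]

theorem const_mem_canonicalSpan [Finite F] (c : R) : (fun _ => c) ∈ canonicalSpan R n F :=
  comp_mulVec_mem_canonicalSpan_of_ne_zero one_ne_zero fun _ => c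

theorem comp_mulVec_mem_canonicalSpan [Finite F] (x : n → F) (φ : (n → F) → R) :
    (fun g : GL n F => φ ((g : Matrix n n F) *ᵥ x)) ∈ canonicalSpan R n F := by
  by_cases hx : x = 0
  · simpa [hx] using const_mem_canonicalSpan (φ 0)
  · exact comp_mulVec_mem_canonicalSpan_of_ne_zero hx φ

theorem smul_indicator_vecMul_eq_mem_canonicalSpan [Fintype F] (y z : n → F) :
    ((Fintype.card F ^ (Fintype.card n - 1) * (Fintype.card F - 1) : ℕ) : R) •
      Set.indicator {g : GL n F | y ᵥ* (g : Matrix n n F) = z} (fun _ => (1 : R)) ∈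
      canonicalSpan R n F := by
  classical
  have hcount (g : GL n F) := card_filter_dotProduct_eq_zero (y ᵥ* (g : Matrix n n F) - z)
  simp only [sub_dotProduct, sub_eq_zero, ← dotProduct_mulVec] at hcount
  have hsum : ((Fintype.card F ^ (Fintype.card n - 1) * (Fintype.card F - 1) : ℕ) : R) •
      Set.indicator {g : GL n F | y ᵥ* (g : Matrix n n F) = z} (fun _ => (1 : R)) =
      (∑ v : n → F, fun g : GL n F =>
        if y ⬝ᵥ (g : Matrix n n F) *ᵥ v = z ⬝ᵥ v then (1 : R) else 0) -
        fun _ => ((Fintype.card F ^ (Fintype.card n - 1) : ℕ) : R) := by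
    ext g
    simp only [Pi.smul_apply, Set.indicator_apply, Set.mem_ofPred_eq, Pi.sub_apply,
      Finset.sum_apply, Finset.sum_boole, hcount]
    simp
  rw [hsum]
  refine Submodule.sub_mem _ (Submodule.sum_mem _ fun v _ => ?_) (const_mem_canonicalSpan _)
  exact comp_mulVec_mem_canonicalSpan v fun w => if y ⬝ᵥ w = z ⬝ᵥ v then (1 : R) else 0

end CanonicalSpan

theorem exists_eq_mulVec_or_exists_eq_vecMul_of_intersecting {F : Type*} [Field F] [Fintype F]
    {S : Set (GL (Fin 2) F)}
    (hS : ∀ g ∈ S, ∀ h ∈ S, ∃ v : Fin 2 → F, v ≠ 0 ∧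
      (g : Matrix (Fin 2) (Fin 2) F) *ᵥ v = (h : Matrix (Fin 2) (Fin 2) F) *ᵥ v)
    (hcard : Fintype.card F * (Fintype.card F - 1) ≤ S.ncard) :
    (∃ x ≠ 0, ∃ y, S = {g : GL (Fin 2) F | (g : Matrix (Fin 2) (Fin 2) F) *ᵥ x = y}) ∨
      (∃ y ≠ 0, ∃ z, S = {g : GL (Fin 2) F | y ᵥ* (g : Matrix (Fin 2) (Fin 2) F) = z}) := by
  have hpos : 0 < Fintype.card F * (Fintype.card F - 1) :=
    Nat.mul_pos Fintype.card_pos (Nat.sub_pos_of_lt Fintype.one_lt_card)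
  obtain ⟨g₀, hg₀⟩ := Set.nonempty_of_ncard_ne_zero (hpos.trans_le hcard).ne'
  have hrank : ∀ A ∈ Units.val '' S, ∀ B ∈ Units.val '' S, (A - B).rank ≤ 1 := by
    rintro _ ⟨g, hg, rfl⟩ _ ⟨h, hh, rfl⟩
    obtain ⟨v, hv, hgh⟩ := hS g hg h hh
    exact Nat.le_of_lt_succ (rank_lt_card_of_mulVec_eq_zero hv (by rw [sub_mulVec, hgh, sub_self]))
  refine (exists_forall_mulVec_eq_or_exists_forall_vecMul_eq hrank).imp ?_ ?_
  · rintro ⟨x, hx, h⟩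
    exact ⟨x, hx, g₀ *ᵥ x, Set.eq_of_subset_of_ncard_le
      (fun g hg => h _ ⟨g, hg, rfl⟩ _ ⟨g₀, hg₀, rfl⟩)
      ((ncard_GL_two_mulVec_eq_le hx _).trans hcard)⟩
  · rintro ⟨y, hy, h⟩
    exact ⟨y, hy, y ᵥ* g₀, Set.eq_of_subset_of_ncard_le
      (fun g hg => h _ ⟨g, hg, rfl⟩ _ ⟨g₀, hg₀, rfl⟩)
      ((ncard_GL_two_vecMul_eq_le hy _).trans hcard)⟩

theorem gl2_ekr_module_general {R F : Type*} [Ring R] [Field F] [Fintype F]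
    (hR : IsUnit ((Fintype.card F * (Fintype.card F - 1) : ℕ) : R)) {S : Set (GL (Fin 2) F)}
    (hS : ∀ g ∈ S, ∀ h ∈ S, ∃ v : Fin 2 → F, v ≠ 0 ∧
      (g : Matrix (Fin 2) (Fin 2) F) *ᵥ v = (h : Matrix (Fin 2) (Fin 2) F) *ᵥ v)
    (hcard : Fintype.card F * (Fintype.card F - 1) ≤ S.ncard) :
    Set.indicator S (fun _ => (1 : R)) ∈ canonicalSpan R (Fin 2) F := by
  rcases exists_eq_mulVec_or_exists_eq_vecMul_of_intersecting hS hcard with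
    ⟨x, hx, y, rfl⟩ | ⟨y, -, z, rfl⟩
  · exact indicator_mulVec_eq_mem_canonicalSpan hx y
  · rw [← Submodule.smul_mem_iff_of_isUnit _ hR]
    simpa using smul_indicator_vecMul_eq_mem_canonicalSpan (R := R) y z

/-- **EKR-module property for GL(2,q).**  The indicator function of any maximum
intersecting set in `GL(2,F)` (of size `q(q-1)`) lies in the complex span of the
characteristic vectors of the canonical intersecting sets. -/
theorem gl2_ekr_module (q : ℕ) (hq : IsPrimePow q) (F : Type*) [Field F] [Fintype F]
    (hF : Fintype.card F = q) (S : Set (GL (Fin 2) F))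
    (hS : ∀ g ∈ S, ∀ h ∈ S, ∃ v : Fin 2 → F, v ≠ 0 ∧
      (g : Matrix (Fin 2) (Fin 2) F).mulVec v = (h : Matrix (Fin 2) (Fin 2) F).mulVec v)
    (hcard : S.ncard = q * (q - 1)) :
    Set.indicator S (fun _ => (1 : ℂ)) ∈
      Submodule.span ℂ {f : GL (Fin 2) F → ℂ | ∃ x y : Fin 2 → F, x ≠ 0 ∧ y ≠ 0 ∧
        f = Set.indicator {g : GL (Fin 2) F | (g : Matrix (Fin 2) (Fin 2) F).mulVec x = y}
              (fun _ => (1 : ℂ))} := by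
  subst hF
  have hunit : IsUnit ((Fintype.card F * (Fintype.card F - 1) : ℕ) : ℂ) :=
    isUnit_iff_ne_zero.2 (Nat.cast_ne_zero.2
      (mul_ne_zero Fintype.card_ne_zero (Nat.sub_ne_zero_of_lt Fintype.one_lt_card)))
  exact gl2_ekr_module_general hunit hS hcard.ge
end

section
/- Let q be a prime power and F a finite field with q elements. For nonzero x, y ∈ F², let v_{x,y} : GL(2,F) → ℂ be the function with v_{x,y}(g) = 1 if g x = y and v_{x,y}(g) = 0 otherwise. Then the ℂ-linear span of the set {v_{x,y} : x, y ∈ F² \ {0}} inside the space of all functions GL(2,F) → ℂ has dimension q³ + q² − 3q − 1. -/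
/-!
The stabilizer of a nonzero vector depends only on the line it spans, so the `v_{x,y}` with `x`
running through one representative `r p` of each line `p` already span the module. It is therefore
the image of `T f g = ∑ p, f (p, g • r p)`, defined on functions of a line and a nonzero vector.
Since `GL₂` is sharply transitive on ordered bases, summing `T f = 0` over the coset
`{g | g • r p = y}` expresses `f (p, y)` through the sums of the `f (p', ·)`, `p' ≠ p`, over the
vectors off the line of `y`. Solving this system gives `f (p, y) = a p + b (line of y)`. Such
functions make up a space of dimension `2 (q + 1) - 1`, which `T` maps onto the constants, so
`dim ker T = 2 (q + 1) - 2`, and the module has dimension `(q + 1) (q² - 1) - 2 (q + 1) + 2`.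
-/

open Finset Module MulAction

namespace EKR

theorem finrank_map_add_finrank_ker_of_ker_le {K V W : Type*} [DivisionRing K] [AddCommGroup V]
    [Module K V] [AddCommGroup W] [Module K W] (T : V →ₗ[K] W) {U : Submodule K V}
    [FiniteDimensional K U] (hU : T.ker ≤ U) :
    finrank K (U.map T) + finrank K T.ker = finrank K U := by
  rw [← (T.domRestrict U).finrank_range_add_finrank_ker, T.range_domRestrict, T.ker_domRestrict,
    (Submodule.comapSubtypeEquivOfLe hU).finrank_eq]

section CanonicalVectors

variable (K : Type*) {G X P : Type*} [Semiring K]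

/-- The characteristic vector `v_{x,y}` of the canonical intersecting set `{g | g • x = y}`. -/
noncomputable def canonicalVector [SMul G X] (x y : X) : G → K :=
  Set.indicator {g : G | g • x = y} fun _ => 1

variable (G X) in
/-- The EKR-module of the action of `G` on `X`: the span of the characteristic vectors of all
canonical intersecting sets. -/
def ekrModule [SMul G X] : Submodule K (G → K) :=
  Submodule.span K (Set.range fun z : X × X => canonicalVector K z.1 z.2)

theorem canonicalVector_eq_of_stabilizer_eq [Group G] [MulAction G X] {x x' : X}
    (h : stabilizer G x = stabilizer G x') (g : G) :
    canonicalVector (G := G) K x (g • x) = canonicalVector K x' (g • x') := by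
  have smul_eq_iff (k : G) : k • x = g • x ↔ k • x' = g • x' := by
    simpa only [mem_stabilizer_iff, mul_smul, inv_smul_eq_iff] using SetLike.ext_iff.1 h (g⁻¹ * k)
  simp only [canonicalVector, smul_eq_iff]

/-- The linear combinations of the vectors `v_{r p, y}` for a family `r` of points; in the
application `r` picks one point in each fibre of an equivariant map `X → P`. -/
noncomputable def canonicalCombination [SMul G X] [Fintype X] [Fintype P] (r : P → X) :
    (P × X → K) →ₗ[K] (G → K) :=
  Fintype.linearCombination K fun z : P × X => canonicalVector K (r z.1) z.2

theorem canonicalCombination_apply [SMul G X] [Fintype X] [Fintype P] (r : P → X)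
    (f : P × X → K) (g : G) : canonicalCombination K r f g = ∑ p, f (p, g • r p) := by
  classical
  simp [canonicalCombination, Fintype.linearCombination_apply, canonicalVector,
    Set.indicator_apply, Fintype.sum_prod_type]

end CanonicalVectors

section SeparatedFunctions

variable (K : Type*) {X P : Type*}

/-- The map sending `(a, b)` to the function `(p, y) ↦ a p + b (π y)`. -/
def separated [Semiring K] (π : X → P) : (P → K) × (P → K) →ₗ[K] (P × X → K) :=
  (LinearMap.funLeft K K Prod.fst).coprod (LinearMap.funLeft K K (π ∘ Prod.snd))

variable {π : X → P}

theorem separated_apply [Semiring K] (a b : P → K) (p : P) (y : X) :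
    separated K π (a, b) (p, y) = a p + b (π y) := rfl

theorem ker_separated [Ring K] [Nonempty P] (hπ : Function.Surjective π) :
    (separated K π).ker = K ∙ ((1, -1) : (P → K) × (P → K)) := by
  obtain ⟨p₀⟩ := ‹Nonempty P›
  ext ⟨a, b⟩
  rw [LinearMap.mem_ker, Submodule.mem_span_singleton]
  constructor
  · intro h
    have add_eq_zero (p p' : P) : a p + b p' = 0 := by
      obtain ⟨y, rfl⟩ := hπ p'
      exact congrFun h (p, y)
    refine ⟨a p₀, Prod.ext (funext fun p => ?_) (funext fun p => ?_)⟩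
    · simpa using (eq_neg_of_add_eq_zero_left (add_eq_zero p₀ p₀)).trans
        (eq_neg_of_add_eq_zero_left (add_eq_zero p p₀)).symm
    · simpa using (eq_neg_of_add_eq_zero_right (add_eq_zero p₀ p)).symm
  · rintro ⟨c, hc⟩
    obtain ⟨rfl, rfl⟩ := Prod.ext_iff.1 hc
    ext ⟨p, y⟩
    simp [separated_apply]

theorem finrank_range_separated [DivisionRing K] [Nonempty P] [Fintype P]
    (hπ : Function.Surjective π) :
    finrank K (separated K π).range + 1 = 2 * Fintype.card P := by
  have ne_zero : ((1, -1) : (P → K) × (P → K)) ≠ 0 := by simp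
  rw [← finrank_span_singleton (K := K) ne_zero, ← ker_separated K hπ,
    LinearMap.finrank_range_add_finrank_ker, finrank_prod, finrank_pi, two_mul]

end SeparatedFunctions

section Fibration

variable {G X P : Type*} [Group G] [MulAction G X] [MulAction G P] {π : X →[G] P}

/-- Any two points of `X` in different fibres of `π` are moved to any other two such points by
exactly one element of `G`. For nonzero vectors over the projective line this says that `GL₂` is
sharply transitive on ordered bases. -/
def SharplyTransitiveAcrossFibers (π : X →[G] P) : Prop :=
  ∀ ⦃x x' y y' : X⦄, π x ≠ π x' → π y ≠ π y' → ∃! g : G, g • x = y ∧ g • x' = y'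

namespace SharplyTransitiveAcrossFibers

theorem isPretransitive [Nontrivial P] (hG : SharplyTransitiveAcrossFibers π)
    (hπ : Function.Surjective π) : IsPretransitive G X where
  exists_smul_eq x y := by
    obtain ⟨x', hx⟩ := hπ.exists.1 (exists_ne (π x))
    obtain ⟨y', hy⟩ := hπ.exists.1 (exists_ne (π y))
    obtain ⟨g, ⟨hg, -⟩, -⟩ := hG hx.symm hy.symm
    exact ⟨g, hg⟩

variable [Fintype X] [DecidableEq P]

theorem sum_filter_smul_eq [Fintype G] [DecidableEq X] {M : Type*} [AddCommMonoid M]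
    (hG : SharplyTransitiveAcrossFibers π) {x x' : X} (hx : π x ≠ π x') (y : X) (φ : X → M) :
    ∑ g : G with g • x = y, φ (g • x') = ∑ y' with π y' ≠ π y, φ y' := by
  have map_ne (g : G) : π (g • x) ≠ π (g • x') := by
    simpa only [map_smul, ne_eq, smul_left_cancel_iff] using hx
  refine sum_nbij (· • x') ?_ ?_ ?_ fun _ _ => rfl
  · intro g hg
    rw [mem_filter_univ] at hg ⊢
    exact hg ▸ (map_ne g).symm
  · intro g hg g' hg' hgg'
    rw [mem_coe, mem_filter_univ] at hg hg'
    exact (hG hx (hg ▸ map_ne g)).unique ⟨hg, rfl⟩ ⟨hg', hgg'.symm⟩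
  · intro y' hy'
    rw [mem_coe, mem_filter_univ] at hy'
    obtain ⟨g, ⟨hgx, hgx'⟩, -⟩ := hG hx hy'.symm
    exact ⟨g, by simpa using hgx, hgx'⟩

theorem card_filter_smul_eq [Fintype G] [DecidableEq X] [Nontrivial P]
    (hG : SharplyTransitiveAcrossFibers π) (hπ : Function.Surjective π) (x y : X) :
    #{g : G | g • x = y} = #{y' | π y' ≠ π y} := by
  obtain ⟨x', hx⟩ := hπ.exists.1 (exists_ne (π x))
  simpa only [card_eq_sum_ones] using hG.sum_filter_smul_eq hx.symm y fun _ => 1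

theorem card_filter_mul_card [Finite G] [Nontrivial P] (hG : SharplyTransitiveAcrossFibers π)
    (hπ : Function.Surjective π) (y : X) :
    #{y' | π y' ≠ π y} * Fintype.card X = Nat.card G := by
  classical
  have := Fintype.ofFinite G
  have := hG.isPretransitive hπ
  rw [← hG.card_filter_smul_eq hπ y y, ← (stabilizer G y).card_mul_index,
    index_stabilizer_of_transitive, Nat.card_eq_fintype_card, ← Fintype.card_subtype,
    Nat.card_eq_fintype_card]
  rfl

end SharplyTransitiveAcrossFibers

theorem range_canonicalCombination [IsPretransitive G X] [Fintype X] [Fintype P] (K : Type*)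
    [Semiring K] {r : P → X} (hr : Function.RightInverse r π)
    (hstab : ∀ x x', π x = π x' → stabilizer G x = stabilizer G x') :
    (canonicalCombination (G := G) K r).range = ekrModule K G X := by
  rw [canonicalCombination, Fintype.range_linearCombination]
  refine congrArg (Submodule.span K) (Set.Subset.antisymm ?_ ?_)
  · rintro _ ⟨⟨p, y⟩, rfl⟩
    exact ⟨(r p, y), rfl⟩
  · rintro _ ⟨⟨x, y⟩, rfl⟩
    obtain ⟨g, rfl⟩ := exists_smul_eq G x y
    exact ⟨(π x, g • r (π x)),
      (canonicalVector_eq_of_stabilizer_eq K (hstab _ _ (hr (π x)).symm) g).symm⟩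

section Combination

variable [Fintype X] [Fintype P] {K : Type*} {r : P → X}

theorem canonicalCombination_separated [Semiring K] (hr : Function.RightInverse r π)
    (a b : P → K) (g : G) :
    canonicalCombination K r (separated K π (a, b)) g = ∑ p, a p + ∑ p, b p := by
  simp only [canonicalCombination_apply, separated_apply, map_smul, hr _, sum_add_distrib]
  exact congrArg _ (Equiv.sum_comp (toPerm g) b)

theorem map_canonicalCombination_range_separated [Semiring K] [Nonempty P]
    (hr : Function.RightInverse r π) :
    (separated K π).range.map (canonicalCombination K r) = K ∙ (1 : G → K) := by
  classical
  obtain ⟨p₀⟩ := ‹Nonempty P›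
  apply le_antisymm
  · rintro _ ⟨_, ⟨⟨a, b⟩, rfl⟩, rfl⟩
    refine Submodule.mem_span_singleton.2 ⟨∑ p, a p + ∑ p, b p, funext fun g => ?_⟩
    simp [canonicalCombination_separated hr]
  · rw [Submodule.span_singleton_le_iff_mem]
    refine ⟨_, ⟨(Pi.single p₀ 1, 0), rfl⟩, funext fun g => ?_⟩
    simp [canonicalCombination_separated hr]

variable [Finite G] [Nontrivial P]

theorem card_mul_apply_add_sum_of_mem_ker [Semiring K] [DecidableEq P]
    (hG : SharplyTransitiveAcrossFibers π) (hr : Function.RightInverse r π) {f : P × X → K}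
    (hf : f ∈ (canonicalCombination (G := G) K r).ker) (p : P) (y : X) :
    #{y' | π y' ≠ π y} * f (p, y) + ∑ p' ∈ univ.erase p, ∑ y' with π y' ≠ π y, f (p', y') = 0 := by
  classical
  have := Fintype.ofFinite G
  have ne_of_mem {p' : P} (hp' : p' ∈ univ.erase p) : π (r p) ≠ π (r p') := by
    simpa only [hr _] using (ne_of_mem_erase hp').symm
  calc
    _ = ∑ g : G with g • r p = y, f (p, g • r p) +
        ∑ p' ∈ univ.erase p, ∑ g : G with g • r p = y, f (p', g • r p') := by
      congr 1
      · rw [← hG.card_filter_smul_eq hr.surjective (r p) y, ← nsmul_eq_mul, ← sum_const]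
        exact sum_congr rfl fun g hg => by rw [(mem_filter_univ g).1 hg]
      · exact sum_congr rfl fun p' hp' =>
          (hG.sum_filter_smul_eq (ne_of_mem hp') y fun y' => f (p', y')).symm
    _ = ∑ g : G with g • r p = y, ∑ p', f (p', g • r p') := by
      rw [add_sum_erase univ (fun p' => ∑ g : G with g • r p = y, f (p', g • r p')) (mem_univ p),
        sum_comm]
    _ = 0 := sum_eq_zero fun g _ => by
      rw [← canonicalCombination_apply, LinearMap.mem_ker.1 hf, Pi.zero_apply]

variable [Field K] {f : P × X → K}

theorem apply_eq_of_mem_ker (hG : SharplyTransitiveAcrossFibers π)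
    (hr : Function.RightInverse r π) (hK : (Nat.card G : K) ≠ 0)
    (hf : f ∈ (canonicalCombination (G := G) K r).ker) (p : P) {y y' : X} (hy : π y = π y') :
    f (p, y) = f (p, y') := by
  classical
  rw [← hG.card_filter_mul_card hr.surjective y, Nat.cast_mul] at hK
  have kernel_eq := (card_mul_apply_add_sum_of_mem_ker hG hr hf p y).trans
    (card_mul_apply_add_sum_of_mem_ker hG hr hf p y').symm
  rw [← hy] at kernel_eq
  exact mul_left_cancel₀ (left_ne_zero_of_mul hK) (add_right_cancel kernel_eq)

theorem card_mul_apply_of_mem_ker [DecidableEq P] (hG : SharplyTransitiveAcrossFibers π)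
    (hr : Function.RightInverse r π) (hK : (Nat.card G : K) ≠ 0)
    (hf : f ∈ (canonicalCombination (G := G) K r).ker) (p : P) (y : X) :
    Fintype.card X * f (p, y) =
      ∑ y', f (p, y') + (∑ p', ∑ y' with π y' = π y, f (p', y') - ∑ p', ∑ y', f (p', y')) := by
  have card_split : (#{y' | π y' = π y} + #{y' | π y' ≠ π y} : K) = Fintype.card X := by
    rw [← Nat.cast_add, card_filter_add_card_filter_not, card_univ]
  have sum_split (p' : P) : ∑ y' with π y' = π y, f (p', y') + ∑ y' with π y' ≠ π y, f (p', y') =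
      ∑ y', f (p', y') := sum_filter_add_sum_filter_not _ _ _
  have sum_fiber : ∑ y' with π y' = π y, f (p, y') = #{y' | π y' = π y} * f (p, y) := by
    rw [← nsmul_eq_mul, ← sum_const]
    exact sum_congr rfl fun y' hy' =>
      apply_eq_of_mem_ker hG hr hK hf p ((mem_filter_univ y').1 hy')
  have kernel_eq := card_mul_apply_add_sum_of_mem_ker hG hr hf p y
  have erase_split := add_sum_erase univ (fun p' => ∑ y' with π y' ≠ π y, f (p', y')) (mem_univ p)
  simp only [← sum_split, sum_add_distrib, ← erase_split, sum_fiber, ← card_split]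
  linear_combination kernel_eq

theorem ker_canonicalCombination_le_range_separated (hG : SharplyTransitiveAcrossFibers π)
    (hr : Function.RightInverse r π) (hK : (Nat.card G : K) ≠ 0) :
    (canonicalCombination (G := G) K r).ker ≤ (separated K π).range := by
  classical
  intro f hf
  refine ⟨(fun p => (∑ y', f (p, y')) / Fintype.card X, fun p =>
    (∑ p', ∑ y' with π y' = p, f (p', y') - ∑ p', ∑ y', f (p', y')) / Fintype.card X), ?_⟩
  ext ⟨p, y⟩
  have card_ne_zero : (Fintype.card X : K) ≠ 0 := by
    rw [← hG.card_filter_mul_card hr.surjective y, Nat.cast_mul] at hK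
    exact right_ne_zero_of_mul hK
  rw [separated_apply, ← add_div, div_eq_iff card_ne_zero, mul_comm (f _)]
  exact (card_mul_apply_of_mem_ker hG hr hK hf p y).symm

theorem finrank_ker_canonicalCombination (hG : SharplyTransitiveAcrossFibers π)
    (hr : Function.RightInverse r π) (hK : (Nat.card G : K) ≠ 0) :
    finrank K (canonicalCombination (G := G) K r).ker + 2 = 2 * Fintype.card P := by
  have finrank_map_add := finrank_map_add_finrank_ker_of_ker_le (canonicalCombination (G := G) K r)
    (ker_canonicalCombination_le_range_separated hG hr hK)
  have finrank_const : finrank K (K ∙ (1 : G → K)) = 1 := finrank_span_singleton one_ne_zero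
  rw [map_canonicalCombination_range_separated hr, finrank_const] at finrank_map_add
  rw [← finrank_range_separated K hr.surjective, ← finrank_map_add]
  ring

end Combination

theorem finrank_ekrModule [Finite G] [Finite X] [Finite P] [Nontrivial P] {K : Type*} [Field K]
    (hG : SharplyTransitiveAcrossFibers π) (hπ : Function.Surjective π)
    (hstab : ∀ x x', π x = π x' → stabilizer G x = stabilizer G x')
    (hK : (Nat.card G : K) ≠ 0) :
    finrank K (ekrModule K G X) + 2 * Nat.card P = Nat.card P * Nat.card X + 2 := by
  have := Fintype.ofFinite X
  have := Fintype.ofFinite P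
  have := hG.isPretransitive hπ
  obtain ⟨r, hr⟩ := hπ.hasRightInverse
  calc
    _ = finrank K (canonicalCombination (G := G) K r).range +
        (finrank K (canonicalCombination (G := G) K r).ker + 2) := by
      rw [range_canonicalCombination K hr hstab, finrank_ker_canonicalCombination hG hr hK,
        Nat.card_eq_fintype_card]
    _ = finrank K (P × X → K) + 2 := by
      rw [← add_assoc, LinearMap.finrank_range_add_finrank_ker]
    _ = _ := by
      rw [finrank_pi, Fintype.card_prod, Nat.card_eq_fintype_card, Nat.card_eq_fintype_card]

end Fibration

section GeneralLinear

variable {n F : Type*} [Fintype n] [DecidableEq n] [Field F]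

theorem existsUnique_smul_eq_of_linearIndependent {b c : n → n → F}
    (hb : LinearIndependent F b) (hc : LinearIndependent F c) :
    ∃! g : GL n F, ∀ i, g • b i = c i := by
  obtain ⟨B, hB⟩ := Matrix.linearIndependent_cols_iff_isUnit (A := (Matrix.of b).transpose).1 hb
  obtain ⟨C, hC⟩ := Matrix.linearIndependent_cols_iff_isUnit (A := (Matrix.of c).transpose).1 hc
  have smul_eq_iff (g : GL n F) : (∀ i, g • b i = c i) ↔ g * B = C := by
    rw [Units.ext_iff, Units.val_mul, hB, hC, ← Matrix.transpose_inj, ← Matrix.ext_iff]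
    exact forall_congr' fun i => funext_iff
  simp only [smul_eq_iff, ← eq_mul_inv_iff_mul_eq, existsUnique_eq]

variable (n F) in
/-- The map sending a nonzero vector to the line it spans, as a map of `GL n F`-sets. -/
def lineMap : {v : n → F // v ≠ 0} →[GL n F] Projectivization F (n → F) where
  toFun := Projectivization.mk' F
  map_smul' _ _ := rfl

variable (n F) in
theorem lineMap_surjective : Function.Surjective (lineMap n F) :=
  Quotient.mk''_surjective

theorem lineMap_ne_iff_linearIndependent {x y : {v : n → F // v ≠ 0}} :
    lineMap n F x ≠ lineMap n F y ↔ LinearIndependent F ![x.1, y.1] := by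
  rw [← Projectivization.independent_mk_iff_LinearIndependent x.2 y.2,
    Projectivization.independent_pair_iff_ne]
  rfl

theorem stabilizer_eq_of_lineMap_eq {x y : {v : n → F // v ≠ 0}}
    (h : lineMap n F x = lineMap n F y) :
    stabilizer (GL n F) x = stabilizer (GL n F) y := by
  obtain ⟨a, ha⟩ := (Projectivization.mk_eq_mk_iff F x.1 y.1 x.2 y.2).1 h
  ext g
  simp only [mem_stabilizer_iff, Subtype.ext_iff, Units.smul_coe, ← ha, smul_comm g a,
    smul_left_cancel_iff]

theorem sharplyTransitiveAcrossFibers_lineMap :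
    SharplyTransitiveAcrossFibers (lineMap (Fin 2) F) := by
  intro x x' y y' hx hy
  simpa [Fin.forall_fin_two, Subtype.ext_iff] using existsUnique_smul_eq_of_linearIndependent
    (lineMap_ne_iff_linearIndependent.1 hx) (lineMap_ne_iff_linearIndependent.1 hy)

theorem ekrModule_eq_span_indicator_mulVec (K : Type*) [Semiring K] :
    ekrModule K (GL n F) {v : n → F // v ≠ 0} =
      Submodule.span K {f : GL n F → K | ∃ x y : n → F, x ≠ 0 ∧ y ≠ 0 ∧
        f = Set.indicator {g : GL n F | (g : Matrix n n F).mulVec x = y} fun _ => 1} := by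
  have indicator_eq (x y : {v : n → F // v ≠ 0}) : canonicalVector (G := GL n F) K x y =
      Set.indicator {g : GL n F | (g : Matrix n n F).mulVec x = y} fun _ => 1 := by
    simp only [canonicalVector, Subtype.ext_iff]
    rfl
  refine congrArg (Submodule.span K) (Set.ext fun f => ⟨?_, ?_⟩)
  · rintro ⟨⟨x, y⟩, rfl⟩
    exact ⟨x, y, x.2, y.2, indicator_eq x y⟩
  · rintro ⟨x, y, hx, hy, rfl⟩
    exact ⟨(⟨x, hx⟩, ⟨y, hy⟩), indicator_eq _ _⟩

end GeneralLinear

end EKR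

open EKR in
theorem gl2_ekr_module_dim_general (K F : Type*) [Field K] [Field F] [Fintype F]
    (hK : (Nat.card (GL (Fin 2) F) : K) ≠ 0) :
    (finrank K (Submodule.span K {f : GL (Fin 2) F → K | ∃ x y : Fin 2 → F, x ≠ 0 ∧ y ≠ 0 ∧
        f = Set.indicator {g : GL (Fin 2) F | (g : Matrix (Fin 2) (Fin 2) F).mulVec x = y}
              fun _ => 1}) : ℤ) =
      (Fintype.card F : ℤ) ^ 3 + (Fintype.card F : ℤ) ^ 2 - 3 * (Fintype.card F : ℤ) - 1 := by
  classical
  have card_lines : Nat.card (Projectivization F (Fin 2 → F)) = Fintype.card F + 1 := by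
    rw [Projectivization.card_of_finrank_two F _ (by simp), Nat.card_eq_fintype_card]
  have card_vectors : Nat.card {v : Fin 2 → F // v ≠ 0} + 1 = Fintype.card F ^ 2 := by
    simp [Nat.sub_add_cancel, Nat.one_le_pow, Fintype.card_pos]
  have : Nontrivial (Projectivization F (Fin 2 → F)) :=
    Finite.one_lt_card_iff_nontrivial.1 (by rw [card_lines]; simp [Fintype.card_pos])
  have finrank_eq := finrank_ekrModule sharplyTransitiveAcrossFibers_lineMap
    (lineMap_surjective (Fin 2) F) (fun _ _ => stabilizer_eq_of_lineMap_eq) hK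
  rw [card_lines, ekrModule_eq_span_indicator_mulVec] at finrank_eq
  zify at finrank_eq card_vectors
  linear_combination finrank_eq + (Fintype.card F + 1 : ℤ) * card_vectors

/-- **Dimension of the EKR-module of GL(2,q).**  The complex span of the characteristic
vectors of the canonical intersecting sets of `GL(2,F)` has dimension `q³ + q² - 3q - 1`. -/
theorem gl2_ekr_module_dim (q : ℕ) (hq : IsPrimePow q) (F : Type*) [Field F] [Fintype F]
    (hF : Fintype.card F = q) :
    (Module.finrank ℂ
      (Submodule.span ℂ {f : GL (Fin 2) F → ℂ | ∃ x y : Fin 2 → F, x ≠ 0 ∧ y ≠ 0 ∧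
        f = Set.indicator {g : GL (Fin 2) F | (g : Matrix (Fin 2) (Fin 2) F).mulVec x = y}
              (fun _ => (1 : ℂ))}) : ℤ) =
      (q : ℤ) ^ 3 + (q : ℤ) ^ 2 - 3 * (q : ℤ) - 1 := by
  subst hF
  exact gl2_ekr_module_dim_general ℂ F (Nat.cast_ne_zero.2 Nat.card_pos.ne')
end

section
/- Let G be a finite group acting transitively on a finite set X with |X| = n. Let ω : G → ℝ be a function that vanishes on every element of G that is not a derangement (i.e., ω(g) = 0 whenever g fixes some point of X). Suppose that for every irreducible complex character χ of G other than the trivial character, the real part of Σ_{g ∈ G} ω(g) χ(g) is at least −χ(1). Then Σ_{g ∈ G} ω(g) ≤ n − 1. -/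
/-!
A real functional `Λ` on functions `G → ℂ` that is additive and nonnegative on the nontrivial
irreducible characters satisfies `m * Λ 1 ≤ Λ χ` for every character `χ`, where `m` is the
multiplicity of the trivial character in `χ`. Apply this to `Λ χ = Re (χ 1 + ∑ g, ω g * χ g)` and
the permutation character `π` of `X`. As `π g` counts the fixed points of `g`, the product
`ω g * π g` always vanishes, so that `Λ π = π 1 = |X|`, while `Λ 1 = 1 + ∑ g, ω g` at
the trivial character. By Burnside's lemma the multiplicity of the trivial character in `π` is the
number of orbits.
-/

open Module Representation

section Trace

variable {R M : Type*} [CommRing R] [AddCommGroup M] [Module R M]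

theorem trace_eq_trace_restrict_add_of_isCompl {p q : Submodule R M} [Module.Free R p]
    [Module.Finite R p] [Module.Free R q] [Module.Finite R q] (hpq : IsCompl p q) {f : End R M}
    (hp : Set.MapsTo f p p) (hq : Set.MapsTo f q q) :
    LinearMap.trace R M f =
      LinearMap.trace R p (f.restrict hp) + LinearMap.trace R q (f.restrict hq) := by
  let N : Bool → Submodule R M := fun b ↦ cond b p q
  have hN : DirectSum.IsInternal N :=
    (DirectSum.isInternal_submodule_iff_isCompl N Bool.false_ne_true Bool.univ_eq).mpr hpq.symm
  have : ∀ b, Module.Free R (N b) := Bool.forall_bool.mpr ⟨‹_›, ‹_›⟩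
  have : ∀ b, Module.Finite R (N b) := Bool.forall_bool.mpr ⟨‹_›, ‹_›⟩
  have hf : ∀ b, Set.MapsTo f (N b) (N b) := Bool.forall_bool.mpr ⟨hq, hp⟩
  exact (LinearMap.trace_eq_sum_trace_restrict hN hf).trans (Fintype.sum_bool _)

end Trace

section Character

variable {k G V : Type*} [Field k] [Monoid G] [AddCommGroup V] [Module k V]
  {ρ : Representation k G V}

theorem isCompl_toSubmodule {A B : Subrepresentation ρ} (hAB : IsCompl A B) :
    IsCompl A.toSubmodule B.toSubmodule :=
  ⟨disjoint_iff.mpr (congrArg Subrepresentation.toSubmodule hAB.inf_eq_bot),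
    codisjoint_iff.mpr (congrArg Subrepresentation.toSubmodule hAB.sup_eq_top)⟩

theorem character_eq_add_of_isCompl [FiniteDimensional k V] {A B : Subrepresentation ρ}
    (hAB : IsCompl A B) :
    ρ.character = A.toRepresentation.character + B.toRepresentation.character :=
  funext fun g ↦ trace_eq_trace_restrict_add_of_isCompl (isCompl_toSubmodule hAB)
    (A.apply_mem_toSubmodule g) (B.apply_mem_toSubmodule g)

theorem finrank_toSubmodule_lt [FiniteDimensional k V] {A : Subrepresentation ρ} (hA : A ≠ ⊤) :
    finrank k A.toSubmodule < finrank k V :=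
  Submodule.finrank_lt fun h ↦ hA (Subrepresentation.toSubmodule_injective h)

variable (ρ)

theorem character_eq_zero_of_subsingleton [Subsingleton V] : ρ.character = 0 :=
  funext fun g ↦ by rw [character, Subsingleton.elim (ρ g) 0, map_zero, Pi.zero_apply]

theorem nontrivial_subrepresentation [Nontrivial V] : Nontrivial (Subrepresentation ρ) :=
  ⟨⊥, ⊤, fun h ↦ bot_ne_top (α := Submodule k V) (congrArg Subrepresentation.toSubmodule h)⟩

theorem exists_ne_bot_ne_top_of_not_isIrreducible [Nontrivial V] (hρ : ¬ρ.IsIrreducible) :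
    ∃ A : Subrepresentation ρ, A ≠ ⊥ ∧ A ≠ ⊤ := by
  have := nontrivial_subrepresentation ρ
  by_contra! h
  exact hρ ⟨fun A ↦ or_iff_not_imp_left.mpr (h A)⟩

theorem isIrreducible_of_finrank_eq_one (hV : finrank k V = 1) : ρ.IsIrreducible := by
  have : IsSimpleOrder (Submodule k V) := is_simple_module_of_finrank_eq_one hV
  have := nontrivial_of_finrank_eq_succ hV
  have := nontrivial_subrepresentation ρ
  exact ⟨fun A ↦ (eq_bot_or_eq_top A.toSubmodule).imp
    (fun h ↦ Subrepresentation.toSubmodule_injective h)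
    (fun h ↦ Subrepresentation.toSubmodule_injective h)⟩

variable (k G) in
theorem character_trivial_self : (trivial k G k).character = 1 :=
  funext fun _ ↦ (LinearMap.trace_one k k).trans (by simp)

end Character

section FiniteGroup

variable {k G : Type*} [Field k] [Group G]

universe u in
theorem character_induction [Finite G] [NeZero (Nat.card G : k)] {p : (G → k) → Prop}
    (zero : p 0) (add : ∀ χ ψ, p χ → p ψ → p (χ + ψ))
    (irreducible : ∀ (W : Type u) [AddCommGroup W] [Module k W] [FiniteDimensional k W]
      (σ : Representation k G W), σ.IsIrreducible → p σ.character)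
    {V : Type u} [AddCommGroup V] [Module k V] [FiniteDimensional k V]
    (ρ : Representation k G V) : p ρ.character := by
  induction hn : finrank k V using Nat.strong_induction_on generalizing V with
  | _ n ih =>
    subst hn
    by_cases hρ : ρ.IsIrreducible
    · exact irreducible V ρ hρ
    rcases subsingleton_or_nontrivial V with _ | _
    · exact character_eq_zero_of_subsingleton ρ ▸ zero
    obtain ⟨A, hA_bot, hA_top⟩ := exists_ne_bot_ne_top_of_not_isIrreducible ρ hρ
    obtain ⟨B, hAB⟩ := exists_isCompl A
    have hB_top : B ≠ ⊤ := by
      rintro rfl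
      exact hA_bot (eq_bot_of_isCompl_top hAB)
    rw [character_eq_add_of_isCompl hAB]
    exact add _ _ (ih _ (finrank_toSubmodule_lt hA_top) _ rfl)
      (ih _ (finrank_toSubmodule_lt hB_top) _ rfl)

theorem sum_character_eq_zero_of_ne_one [Fintype G] [NeZero (Nat.card G : k)] {V : Type*}
    [AddCommGroup V] [Module k V] [FiniteDimensional k V] {ρ : Representation k G V}
    (hρ : ρ.IsIrreducible) (hne : ρ.character ≠ 1) : ∑ g, ρ.character g = 0 := by
  have := invertibleOfNonzero (NeZero.ne (Nat.card G : k))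
  have : (trivial k G k).IsIrreducible := isIrreducible_of_finrank_eq_one _ (finrank_self k)
  have : IsEmpty ((trivial k G k).Equiv ρ) :=
    ⟨fun e ↦ hne ((char_iso e).symm.trans (character_trivial_self k G))⟩
  have hinner := card_inv_mul_sum_char_mul_char_eq_finrank (trivial k G k) ρ
  rw [finrank_zero_of_subsingleton, Nat.cast_zero,
    mul_eq_zero_iff_left (inv_ne_zero (NeZero.ne _))] at hinner
  simpa only [character_trivial_self, Pi.one_apply, mul_one] using hinner

universe u in
theorem finrank_invariants_nsmul_map_one_le [Finite G] [CharZero k] {M : Type*} [AddCommMonoid M]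
    [PartialOrder M] [IsOrderedAddMonoid M] (Λ : (G → k) →+ M)
    (hΛ : ∀ (W : Type u) [AddCommGroup W] [Module k W] [FiniteDimensional k W]
      (σ : Representation k G W), σ.IsIrreducible → σ.character ≠ 1 → 0 ≤ Λ σ.character)
    {V : Type u} [AddCommGroup V] [Module k V] [FiniteDimensional k V]
    (ρ : Representation k G V) : finrank k ρ.invariants • Λ 1 ≤ Λ ρ.character := by
  have := Fintype.ofFinite G
  have := invertibleOfNonzero (NeZero.ne (Nat.card G : k))
  have hmult : ∃ m : ℕ, (Nat.card G : k)⁻¹ * ∑ g, ρ.character g = m ∧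
      m • Λ 1 ≤ Λ ρ.character := by
    refine character_induction (p := fun χ ↦ ∃ m : ℕ, (Nat.card G : k)⁻¹ * ∑ g, χ g = m ∧
      m • Λ 1 ≤ Λ χ) ⟨0, by simp⟩ ?_ ?_ ρ
    · rintro χ ψ ⟨m, hm, hmχ⟩ ⟨n, hn, hnψ⟩
      refine ⟨m + n, ?_, ?_⟩
      · simp only [Pi.add_apply, Finset.sum_add_distrib, mul_add, hm, hn, Nat.cast_add]
      · rw [add_nsmul, map_add]
        exact add_le_add hmχ hnψ
    · intro W _ _ _ σ hσ
      by_cases htriv : σ.character = 1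
      · exact ⟨1, by simp [htriv], by simp [htriv]⟩
      · exact ⟨0, by simp [sum_character_eq_zero_of_ne_one hσ htriv],
          by simpa using hΛ W σ hσ htriv⟩
  obtain ⟨m, hm, hle⟩ := hmult
  rw [card_inv_mul_sum_char_eq_finrank, Nat.cast_inj] at hm
  exact hm ▸ hle

end FiniteGroup

universe u in
theorem simple_of_isIrreducible {k G V : Type u} [Field k] [IsAlgClosed k] [CharZero k] [Group G]
    [Finite G] [AddCommGroup V] [Module k V] [FiniteDimensional k V] {ρ : Representation k G V}
    (hρ : ρ.IsIrreducible) : CategoryTheory.Simple (FDRep.of ρ) := by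
  have := Fintype.ofFinite G
  have := invertibleOfNonzero (NeZero.ne (Nat.card G : k))
  have hnorm := char_orthonormal ρ ρ
  rw [if_pos ⟨Representation.Equiv.refl ρ⟩, inv_mul_eq_one₀ (NeZero.ne _)] at hnorm
  exact (FDRep.simple_iff_char_is_norm_one _).mpr hnorm.symm

section PermutationCharacter

variable (k G X : Type*) [Field k] [Finite X]

theorem character_ofMulAction [Monoid G] [MulAction G X] (g : G) :
    (ofMulAction k G X).character g = Nat.card (MulAction.fixedBy X g) := by
  classical
  have := Fintype.ofFinite X
  let b := MonoidAlgebra.basis X k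
  have hdiag (x : X) : LinearMap.toMatrix b b (ofMulAction k G X g) x x =
      if g • x = x then 1 else 0 := by
    simp [b, MonoidAlgebra.basis, LinearMap.toMatrix_apply, Finsupp.single_apply]
  simp only [character, LinearMap.trace_eq_matrix_trace k b, Matrix.trace, Matrix.diag_apply, hdiag,
    Finset.sum_boole, MulAction.fixedBy, Set.coe_ofPred, Nat.card_eq_fintype_card,
    Fintype.card_subtype]

theorem finrank_invariants_ofMulAction [Group G] [Finite G] [CharZero k] [MulAction G X] :
    finrank k (ofMulAction k G X).invariants = Nat.card (MulAction.orbitRel.Quotient G X) := by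
  classical
  have := Fintype.ofFinite G
  have := Fintype.ofFinite X
  have := invertibleOfNonzero (NeZero.ne (Nat.card G : k))
  have burnside := MulAction.sum_card_fixedBy_eq_card_orbits_mul_card_group G X
  simp only [← Nat.card_eq_fintype_card] at burnside
  rw [← Nat.cast_inj (R := k), ← card_inv_mul_sum_char_eq_finrank]
  simp only [character_ofMulAction]
  rw [← Nat.cast_sum, burnside, Nat.cast_mul, mul_comm, mul_inv_cancel_right₀ (NeZero.ne _)]

end PermutationCharacter

theorem card_orbits_eq_one (G X : Type*) [Group G] [MulAction G X]
    [MulAction.IsPretransitive G X] [Nonempty X] :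
    Nat.card (MulAction.orbitRel.Quotient G X) = 1 :=
  Nat.card_eq_one_iff_unique.mpr <| (unique_iff_subsingleton_and_nonempty _).mp <|
    (MulAction.pretransitive_iff_unique_quotient_of_nonempty G X).mp inferInstance

section LinearProgramming

variable {G : Type*} [Group G] [Fintype G]

/-- The functional `χ ↦ Re (χ 1 + ∑ g, ω g * χ g)`, whose nonnegativity at `χ` is the linear
programming constraint that the weight `ω` has to satisfy at `χ`. -/
noncomputable def constraintFunctional (ω : G → ℝ) : (G → ℂ) →+ ℝ :=
  Complex.reAddGroupHom.comp
    (Pi.evalAddMonoidHom (fun _ ↦ ℂ) 1 +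
      ∑ g, (AddMonoidHom.mulLeft (ω g : ℂ)).comp (Pi.evalAddMonoidHom (fun _ ↦ ℂ) g))

theorem constraintFunctional_apply (ω : G → ℝ) (χ : G → ℂ) :
    constraintFunctional ω χ = (χ 1).re + (∑ g, (ω g : ℂ) * χ g).re := by
  simp [constraintFunctional]

theorem constraintFunctional_one (ω : G → ℝ) : constraintFunctional ω 1 = 1 + ∑ g, ω g := by
  simp [constraintFunctional_apply]

theorem constraintFunctional_character_ofMulAction {X : Type*} [Finite X] [MulAction G X]
    {ω : G → ℝ} (hω : ∀ g : G, (∃ x : X, g • x = x) → ω g = 0) :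
    constraintFunctional ω (ofMulAction ℂ G X).character = Nat.card X := by
  have hsum : ∑ g, (ω g : ℂ) * (ofMulAction ℂ G X).character g = 0 := by
    refine Finset.sum_eq_zero fun g _ ↦ ?_
    by_cases hg : ∃ x : X, g • x = x
    · rw [hω g hg, Complex.ofReal_zero, zero_mul]
    · have : IsEmpty (MulAction.fixedBy X g) := ⟨fun x ↦ hg ⟨x, x.2⟩⟩
      rw [character_ofMulAction, Nat.card_of_isEmpty, Nat.cast_zero, mul_zero]
  rw [constraintFunctional_apply, hsum, character_ofMulAction, MulAction.fixedBy_one_eq_univ,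
    Nat.card_univ, Complex.natCast_re, Complex.zero_re, add_zero]

end LinearProgramming

theorem lp_bound_general (G : Type) [Group G] [Fintype G] (X : Type) [Finite X] [MulAction G X]
    (ω : G → ℝ)
    (hω : ∀ g : G, (∃ x : X, g • x = x) → ω g = 0)
    (hχ : ∀ V : FDRep ℂ G, CategoryTheory.Simple V →
      V.character ≠ (fun _ => 1) →
      -(V.character 1).re ≤ (∑ g : G, (ω g : ℂ) * V.character g).re) :
    Nat.card (MulAction.orbitRel.Quotient G X) * (1 + ∑ g : G, ω g) ≤ Nat.card X := by
  have hΛ : ∀ (W : Type) [AddCommGroup W] [Module ℂ W] [FiniteDimensional ℂ W]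
      (σ : Representation ℂ G W), σ.IsIrreducible → σ.character ≠ 1 →
      0 ≤ constraintFunctional ω σ.character := fun W _ _ _ σ hσ hne ↦ by
    rw [constraintFunctional_apply, ← neg_le_iff_add_nonneg']
    exact hχ (FDRep.of σ) (simple_of_isIrreducible hσ) hne
  have hmult := finrank_invariants_nsmul_map_one_le _ hΛ (ofMulAction ℂ G X)
  rwa [finrank_invariants_ofMulAction, constraintFunctional_one,
    constraintFunctional_character_ofMulAction hω, nsmul_eq_mul] at hmult

/-- **The linear programming bound (Lemma 2.3).**  Let `G` act transitively on a finite
set `X` of size `n`, and let `ω : G → ℝ` vanish on all non-derangements.  If for every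
non-trivial irreducible complex character `χ` of `G` the real part of `∑ g, ω g * χ g`
is at least `-χ(1)`, then `∑ g, ω g ≤ n - 1`. -/
theorem lp_bound (G : Type) [Group G] [Fintype G] (X : Type) [Fintype X] [Nonempty X]
    [MulAction G X] [MulAction.IsPretransitive G X]
    (ω : G → ℝ)
    (hω : ∀ g : G, (∃ x : X, g • x = x) → ω g = 0)
    (hχ : ∀ V : FDRep ℂ G, CategoryTheory.Simple V →
      V.character ≠ (fun _ => 1) →
      -(V.character 1).re ≤ (∑ g : G, (ω g : ℂ) * V.character g).re) :
    ∑ g : G, ω g ≤ (Fintype.card X : ℝ) - 1 := by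
  simpa [card_orbits_eq_one, le_sub_iff_add_le'] using lp_bound_general G X ω hω hχ
end

section
/- Let q be a prime power and F a finite field with q elements. Let M ∈ GL(2,F) be a non-scalar matrix with a unique eigenvalue λ ∈ F (so (M − λI)² = 0 and M is not diagonalizable), and let s ∈ F² be a nonzero eigenvector, M s = λ s. Then for z ∈ F², the affine map f(v) = M v + z maps no affine line of F² to itself if and only if λ = 1 and z does not lie in the line F•s spanned by s. -/
/-- `ℓ ⊆ F²` is an affine line if `ℓ = {u + t • w : t ∈ F}` for some `u, w` with `w ≠ 0`. -/
def IsAffineLine {F : Type*} [Field F] (ℓ : Set (Fin 2 → F)) : Prop :=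
  ∃ u w : Fin 2 → F, w ≠ 0 ∧ ℓ = {p | ∃ t : F, p = u + t • w}

/-!
The linear part `f` of the map acts on the quotient by its eigenline `K ∙ s` as the scalar `lam`,
and `K ∙ s` is the only direction that `f` preserves. So a line is mapped to itself exactly when
it is `u + K ∙ s` with `f u + z - u ∈ K ∙ s`, that is, `(lam - 1) • u + z ∈ K ∙ s`. This can be
solved for `u` if `lam ≠ 1`; if `lam = 1`, it says `z ∈ K ∙ s`.
-/

open Module Module.End

section Direction

variable {R V P : Type*} [Ring R] [AddCommGroup V] [Module R V] [AddTorsor V P]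

theorem map_mk'_eq_self_iff (A : P →ᵃ[R] P) (p : P) (W : Submodule R V) :
    (AffineSubspace.mk' p W).map A = AffineSubspace.mk' p W ↔
      A p -ᵥ p ∈ W ∧ W.map A.linear = W := by
  rw [AffineSubspace.map_mk']
  constructor
  · intro h
    refine ⟨?_, by simpa using congrArg AffineSubspace.direction h⟩
    rw [← AffineSubspace.mem_mk', ← h]
    exact AffineSubspace.self_mem_mk' _ _
  · rintro ⟨hp, hW⟩
    rw [hW]
    simpa using AffineSubspace.mk'_eq (AffineSubspace.mem_mk'.mpr hp)

end Direction

section Eigenspace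

variable {R V : Type*} [CommRing R] [AddCommGroup V] [Module R V] {f : End R V} {lam : R}

theorem apply_sub_smul_mem_eigenspace (hf : (f - lam • 1) ^ 2 = 0) (v : V) :
    f v - lam • v ∈ f.eigenspace lam := by
  rw [eigenspace_def, LinearMap.mem_ker]
  simpa [pow_two] using LinearMap.congr_fun hf v

theorem map_vadd_vsub_vadd_mem_eigenspace_iff {P : Type*} [AddTorsor V P] {A : P →ᵃ[R] P}
    (hA : (A.linear - lam • 1) ^ 2 = 0) (p : P) (v : V) :
    A (v +ᵥ p) -ᵥ (v +ᵥ p) ∈ eigenspace A.linear lam ↔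
      (lam - 1) • v + (A p -ᵥ p) ∈ eigenspace A.linear lam := by
  have hdecomp : A (v +ᵥ p) -ᵥ (v +ᵥ p) =
      (A.linear v - lam • v) + ((lam - 1) • v + (A p -ᵥ p)) := by
    rw [A.map_vadd, vadd_vsub_vadd_comm]
    module
  rw [hdecomp, Submodule.add_mem_iff_right _ (apply_sub_smul_mem_eigenspace hA v)]

variable [IsDomain R] [IsTorsionFree R V]

theorem eq_of_hasEigenvalue_of_isNilpotent_sub {c : R} (hf : IsNilpotent (f - lam • 1))
    (hc : f.HasEigenvalue c) : c = lam := by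
  have hsub : (f - lam • 1).HasEigenvalue (c - lam) :=
    hasEigenvalue_sub_iff.mpr (by rwa [sub_add_cancel])
  exact sub_eq_zero.mp (hsub.isNilpotent_of_isNilpotent hf).eq_zero

theorem map_span_singleton_eq_self_iff (hf : IsNilpotent (f - lam • 1)) (hlam : IsUnit lam)
    {w : V} (hw : w ≠ 0) : (R ∙ w).map f = R ∙ w ↔ w ∈ f.eigenspace lam := by
  rw [Submodule.map_span, Set.image_singleton, mem_eigenspace_iff]
  constructor
  · intro h
    obtain ⟨c, hc⟩ : ∃ c : R, c • w = f w :=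
      Submodule.mem_span_singleton.mp (h ▸ Submodule.mem_span_singleton_self (f w))
    have hcw : f.HasEigenvector c w := ⟨mem_eigenspace_iff.mpr hc.symm, hw⟩
    rw [← hc, eq_of_hasEigenvalue_of_isNilpotent_sub hf (hasEigenvalue_of_hasEigenvector hcw)]
  · intro h
    rw [h, Submodule.span_singleton_smul_eq hlam]

end Eigenspace

section Field

variable {K V : Type*} [Field K] [AddCommGroup V] [Module K V] {lam : K} {s : V}

theorem ne_zero_of_hasEigenvalue_of_isUnit {f : End K V} (hf : IsUnit f)
    (hlam : f.HasEigenvalue lam) : lam ≠ 0 := by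
  rintro rfl
  exact spectrum.zero_notMem K hf hlam.mem_spectrum

theorem eigenspace_eq_span_singleton {f : End K V} (hV : finrank K V = 2) (hf : f ≠ lam • 1)
    (hs : f.HasEigenvector lam s) : f.eigenspace lam = K ∙ s := by
  have : FiniteDimensional K V := .of_finrank_pos (by lia)
  have hne_top : f.eigenspace lam ≠ ⊤ := by
    rwa [eigenspace_def, Ne, LinearMap.ker_eq_top, sub_eq_zero]
  have hlt : finrank K (f.eigenspace lam) < 2 := hV ▸ Submodule.finrank_lt hne_top
  refine (Submodule.eq_of_le_of_finrank_le ?_ ?_).symm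
  · exact (Submodule.span_singleton_le_iff_mem _ _).mpr hs.1
  · rw [finrank_span_singleton hs.2]
    lia

variable {P : Type*} [AddTorsor V P] {A : P →ᵃ[K] P}

theorem exists_vsub_mem_eigenspace_iff (hA : (A.linear - lam • 1) ^ 2 = 0) (p : P) :
    (∃ u : P, A u -ᵥ u ∈ eigenspace A.linear lam) ↔
      lam = 1 → A p -ᵥ p ∈ eigenspace A.linear lam := by
  rw [← (Equiv.vaddConst p).exists_congr_right]
  simp only [Equiv.coe_vaddConst, map_vadd_vsub_vadd_mem_eigenspace_iff hA]
  constructor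
  · rintro ⟨v, hv⟩ rfl
    simpa using hv
  · intro h
    obtain rfl | hlam := eq_or_ne lam 1
    · exact ⟨0, by simpa using h rfl⟩
    · refine ⟨(lam - 1)⁻¹ • -(A p -ᵥ p), ?_⟩
      rw [smul_inv_smul₀ (sub_ne_zero.mpr hlam), neg_add_cancel]
      exact Submodule.zero_mem _

theorem exists_map_line_eq_self_iff (hA : (A.linear - lam • 1) ^ 2 = 0) (hlam : lam ≠ 0)
    (hs : s ≠ 0) (hspan : eigenspace A.linear lam = K ∙ s) (p : P) :
    (∃ (u : P) (w : V), w ≠ 0 ∧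
        (AffineSubspace.mk' u (K ∙ w)).map A = AffineSubspace.mk' u (K ∙ w)) ↔
      lam = 1 → A p -ᵥ p ∈ K ∙ s := by
  rw [← hspan, ← exists_vsub_mem_eigenspace_iff hA p]
  refine exists_congr fun u ↦ ?_
  simp only [map_mk'_eq_self_iff]
  constructor
  · rintro ⟨w, hw, hu, hmap⟩
    have hw_mem := (map_span_singleton_eq_self_iff ⟨2, hA⟩ hlam.isUnit hw).mp hmap
    exact (Submodule.span_singleton_le_iff_mem _ _).mpr hw_mem hu
  · intro hu
    have hs_mem : s ∈ eigenspace A.linear lam := hspan ▸ Submodule.mem_span_singleton_self s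
    exact ⟨s, hs, hspan ▸ hu, (map_span_singleton_eq_self_iff ⟨2, hA⟩ hlam.isUnit hs).mpr hs_mem⟩

end Field

theorem isAffineLine_iff_exists_mk' {F : Type*} [Field F] {ℓ : Set (Fin 2 → F)} :
    IsAffineLine ℓ ↔
      ∃ u w : Fin 2 → F, w ≠ 0 ∧ ℓ = (AffineSubspace.mk' u (F ∙ w) : Set (Fin 2 → F)) := by
  have hcoe (u w : Fin 2 → F) :
      {p | ∃ t : F, p = u + t • w} = (AffineSubspace.mk' u (F ∙ w) : Set (Fin 2 → F)) := by
    ext p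
    simp [AffineSubspace.mem_mk', Submodule.mem_span_singleton, eq_sub_iff_add_eq', eq_comm]
  simp only [IsAffineLine, hcoe]

theorem forall_isAffineLine_image_ne_iff {F : Type*} [Field F]
    (A : (Fin 2 → F) →ᵃ[F] (Fin 2 → F)) :
    (∀ ℓ, IsAffineLine ℓ → A '' ℓ ≠ ℓ) ↔
      ¬∃ u w : Fin 2 → F, w ≠ 0 ∧
        (AffineSubspace.mk' u (F ∙ w)).map A = AffineSubspace.mk' u (F ∙ w) := by
  simp only [isAffineLine_iff_exists_mk', ← SetLike.coe_set_eq, AffineSubspace.coe_map]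
  aesop

theorem one_eigenvalue_derangement_iff_general (F : Type*) [Field F]
    (M : GL (Fin 2) F) (lam : F) (s : Fin 2 → F) (z : Fin 2 → F)
    (hnil : ((M : Matrix (Fin 2) (Fin 2) F) - lam • (1 : Matrix (Fin 2) (Fin 2) F)) ^ 2 = 0)
    (hns : (M : Matrix (Fin 2) (Fin 2) F) ≠ lam • (1 : Matrix (Fin 2) (Fin 2) F))
    (hs : s ≠ 0) (heig : (M : Matrix (Fin 2) (Fin 2) F).mulVec s = lam • s) :
    (∀ ℓ : Set (Fin 2 → F), IsAffineLine ℓ →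
        (fun v => (M : Matrix (Fin 2) (Fin 2) F).mulVec v + z) '' ℓ ≠ ℓ) ↔
      (lam = 1 ∧ ∀ c : F, z ≠ c • s) := by
  let f : End F (Fin 2 → F) := Matrix.toLinAlgEquiv' (M : Matrix (Fin 2) (Fin 2) F)
  let A : (Fin 2 → F) →ᵃ[F] (Fin 2 → F) := f.toAffineMap + AffineMap.const F _ z
  have hlinear : A.linear = f := by simp [A]
  have hf_nil : (f - lam • 1) ^ 2 = 0 := by
    simpa [f] using congrArg Matrix.toLinAlgEquiv' hnil
  have hf_ne : f ≠ lam • 1 := by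
    simpa [f] using Matrix.toLinAlgEquiv'.injective.ne hns
  have hf_eig : f.HasEigenvector lam s := ⟨mem_eigenspace_iff.mpr heig, hs⟩
  have hlam : lam ≠ 0 := ne_zero_of_hasEigenvalue_of_isUnit
    (M.isUnit.map Matrix.toLinAlgEquiv') (hasEigenvalue_of_hasEigenvector hf_eig)
  have hspan : f.eigenspace lam = F ∙ s :=
    eigenspace_eq_span_singleton (finrank_fin_fun F) hf_ne hf_eig
  have hzero : A 0 -ᵥ 0 = z := by simp [A]
  rw [← hlinear] at hf_nil hspan
  refine (forall_isAffineLine_image_ne_iff A).trans ?_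
  rw [exists_map_line_eq_self_iff hf_nil hlam hs hspan 0, hzero, Classical.not_imp]
  simp only [Submodule.mem_span_singleton, not_exists, ne_comm (a := z), ne_eq]

/-- Let `M ∈ GL(2,F)` be non-scalar with unique eigenvalue `lam` (so `(M - lam·I)² = 0`),
with nonzero eigenvector `s`.  Then `v ↦ M v + z` fixes no affine line of `F²` if and
only if `lam = 1` and `z ∉ F • s`. -/
theorem one_eigenvalue_derangement_iff (q : ℕ) (hq : IsPrimePow q)
    (F : Type*) [Field F] [Fintype F] (hF : Fintype.card F = q)
    (M : GL (Fin 2) F) (lam : F) (s : Fin 2 → F) (z : Fin 2 → F)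
    (hnil : ((M : Matrix (Fin 2) (Fin 2) F) - lam • (1 : Matrix (Fin 2) (Fin 2) F)) ^ 2 = 0)
    (hns : (M : Matrix (Fin 2) (Fin 2) F) ≠ lam • (1 : Matrix (Fin 2) (Fin 2) F))
    (hs : s ≠ 0) (heig : (M : Matrix (Fin 2) (Fin 2) F).mulVec s = lam • s) :
    (∀ ℓ : Set (Fin 2 → F), IsAffineLine ℓ →
        (fun v => (M : Matrix (Fin 2) (Fin 2) F).mulVec v + z) '' ℓ ≠ ℓ) ↔
      (lam = 1 ∧ ∀ c : F, z ≠ c • s) :=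
  one_eigenvalue_derangement_iff_general F M lam s z hnil hns hs heig
end

section
/- Let q be a prime power and F a finite field with q elements. For c ∈ F \ {0} and z ∈ F², let f_{c,z} : F² → F² be the affine map f_{c,z}(v) = c•v + z. Then every f_{c,z} fixes some affine line of F², and consequently the set T = {f_{c,z} : c ∈ F \ {0}, z ∈ F²}, which has size q²(q−1), is an intersecting set for the action of AGL(2,F) on affine lines: for any two elements f, g of T there is an affine line ℓ with f(ℓ) = g(ℓ). -/
/-! If `c ≠ 1`, then `v ↦ c • v + z` has a fixed point and, its linear part being scalar, preserves
every line through it; a translation preserves every line in its own direction. For two such maps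
`f` and `g`, the map `g⁻¹ ∘ f` is again of this form, and a line fixed by it has the same
image under `f` and `g`. -/

section Dilatation

variable {R M : Type*} [Semiring R] [AddCommMonoid M] [Module R M]

/-- The dilatation `v ↦ c • v + z` of a module, that is, the affine map with scalar linear part `c`
and translation part `z`. It is a bare function rather than an `AffineMap`, so that scalars need
not commute. -/
def dilatation (c : R) (z : M) : M → M := fun v => c • v + z

theorem dilatation_comp_dilatation (c d : R) (y z : M) :
    dilatation d y ∘ dilatation c z = dilatation (d * c) (dilatation d y z) := by
  ext v
  simp only [dilatation, Function.comp_apply, smul_add, mul_smul, add_assoc]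

end Dilatation

section VectorSpace

variable {K V : Type*} [DivisionRing K] [AddCommGroup V] [Module K V]

theorem dilatation_injective2 [Nontrivial V] :
    Function.Injective2 (dilatation : K → V → V → V) := by
  intro c d z y h
  have hzy : z = y := by simpa [dilatation] using congrFun h 0
  obtain ⟨v, hv⟩ := exists_ne (0 : V)
  have hcd : c • v = d • v := by simpa [dilatation, hzy] using congrFun h v
  exact ⟨smul_left_injective K hv hcd, hzy⟩

theorem ncard_setOf_dilatation [Nontrivial V] :
    {f : V → V | ∃ (c : K) (z : V), c ≠ 0 ∧ f = dilatation c z}.ncard =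
      Nat.card Kˣ * Nat.card V := by
  have hset : {f : V → V | ∃ (c : K) (z : V), c ≠ 0 ∧ f = dilatation c z} =
      Set.range fun p : Kˣ × V => dilatation (p.1 : K) p.2 := by
    ext f
    constructor
    · rintro ⟨c, z, hc, rfl⟩
      exact ⟨(Units.mk0 c hc, z), rfl⟩
    · rintro ⟨⟨c, z⟩, rfl⟩
      exact ⟨c, z, c.ne_zero, rfl⟩
  have hinj : Function.Injective fun p : Kˣ × V => dilatation (p.1 : K) p.2 :=
    dilatation_injective2.uncurry.comp (Units.val_injective.prodMap Function.injective_id)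
  rw [hset, Set.ncard_range_of_injective hinj, Nat.card_prod]

theorem exists_dilatation_comp_eq {d : K} (hd : d ≠ 0) {c : K} (hc : c ≠ 0) (y z : V) :
    ∃ (e : K) (x : V), e ≠ 0 ∧ dilatation d y ∘ dilatation e x = dilatation c z := by
  refine ⟨d⁻¹ * c, d⁻¹ • (z - y), mul_ne_zero (inv_ne_zero hd) hc, ?_⟩
  simp [dilatation_comp_dilatation, dilatation, hd]

theorem image_dilatation_mk' {c : K} (hc : c ≠ 0) (z u : V) (S : Submodule K V) :
    dilatation c z '' AffineSubspace.mk' u S = AffineSubspace.mk' (dilatation c z u) S := by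
  have hsub (v : V) : dilatation c z v - dilatation c z u = c • (v - u) := by
    simp only [dilatation, add_sub_add_right_eq_sub, smul_sub]
  have hsurj : Function.Surjective (dilatation c z) := fun p =>
    ⟨c⁻¹ • (p - z), by simp [dilatation, hc]⟩
  have hpre : dilatation c z ⁻¹' AffineSubspace.mk' (dilatation c z u) S =
      AffineSubspace.mk' u S := by
    ext v
    simp [AffineSubspace.mem_mk', hsub, S.smul_mem_iff hc]
  rw [← hpre, Set.image_preimage_eq _ hsurj]

theorem exists_dilatation_sub_mem_span [Nontrivial V] (c : K) (z : V) :
    ∃ u w : V, w ≠ 0 ∧ dilatation c z u - u ∈ K ∙ w := by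
  obtain ⟨w, hw⟩ := exists_ne (0 : V)
  by_cases hc : c = 1
  · by_cases hz : z = 0
    · exact ⟨0, w, hw, by simp [dilatation, hz]⟩
    · exact ⟨0, z, hz, by simp [dilatation]⟩
  · have hfix : dilatation c z ((1 - c)⁻¹ • z) - (1 - c)⁻¹ • z = 0 := by
      have hz : (1 - c) • (1 - c)⁻¹ • z = z := smul_inv_smul₀ (sub_ne_zero.mpr (Ne.symm hc)) z
      rw [sub_smul, one_smul] at hz
      rw [dilatation, sub_eq_zero, ← eq_sub_iff_add_eq', hz]
    exact ⟨(1 - c)⁻¹ • z, w, hw, hfix ▸ zero_mem _⟩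

theorem exists_image_dilatation_mk'_span_eq [Nontrivial V] {c : K} (hc : c ≠ 0) (z : V) :
    ∃ u w : V, w ≠ 0 ∧ dilatation c z '' AffineSubspace.mk' u (K ∙ w) =
      AffineSubspace.mk' u (K ∙ w) := by
  obtain ⟨u, w, hw, hmem⟩ := exists_dilatation_sub_mem_span c z
  have hline : AffineSubspace.mk' (dilatation c z u) (K ∙ w) = AffineSubspace.mk' u (K ∙ w) := by
    simpa only [AffineSubspace.direction_mk'] using
      AffineSubspace.mk'_eq (AffineSubspace.mem_mk'.mpr hmem)
  exact ⟨u, w, hw, by rw [image_dilatation_mk' hc, hline]⟩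

theorem exists_image_dilatation_mk'_span_eq_image_dilatation [Nontrivial V] {c d : K}
    (hc : c ≠ 0) (hd : d ≠ 0) (z y : V) :
    ∃ u w : V, w ≠ 0 ∧ dilatation c z '' AffineSubspace.mk' u (K ∙ w) =
      dilatation d y '' AffineSubspace.mk' u (K ∙ w) := by
  obtain ⟨e, x, he, hcomp⟩ := exists_dilatation_comp_eq hd hc y z
  obtain ⟨u, w, hw, hfix⟩ := exists_image_dilatation_mk'_span_eq he x
  exact ⟨u, w, hw, by rw [← hcomp, Set.image_comp, hfix]⟩

end VectorSpace

theorem isAffineLine_mk'_span {F : Type*} [Field F] (u : Fin 2 → F) {w : Fin 2 → F} (hw : w ≠ 0) :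
    IsAffineLine (AffineSubspace.mk' u (F ∙ w) : Set (Fin 2 → F)) := by
  refine ⟨u, w, hw, ?_⟩
  ext p
  simp only [SetLike.mem_coe, AffineSubspace.mem_mk', vsub_eq_sub, Submodule.mem_span_singleton,
    Set.mem_ofPred_eq, eq_sub_iff_add_eq', eq_comm]

/-- Every map `v ↦ c • v + z` (with `c ≠ 0`) fixes an affine line, and the set of all
such maps, of size `q²(q-1)`, is an intersecting set for the action of `AGL(2,F)` on
affine lines. -/
theorem block_stabilizer_intersecting (q : ℕ) (hq : IsPrimePow q)
    (F : Type*) [Field F] [Fintype F] (hF : Fintype.card F = q) :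
    (∀ c : F, c ≠ 0 → ∀ z : Fin 2 → F, ∃ ℓ : Set (Fin 2 → F), IsAffineLine ℓ ∧
      (fun v => c • v + z) '' ℓ = ℓ) ∧
    {f : (Fin 2 → F) → (Fin 2 → F) |
      ∃ (c : F) (z : Fin 2 → F), c ≠ 0 ∧ f = fun v => c • v + z}.ncard = q ^ 2 * (q - 1) ∧
    (∀ f ∈ {f : (Fin 2 → F) → (Fin 2 → F) |
        ∃ (c : F) (z : Fin 2 → F), c ≠ 0 ∧ f = fun v => c • v + z},
      ∀ g ∈ {f : (Fin 2 → F) → (Fin 2 → F) |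
        ∃ (c : F) (z : Fin 2 → F), c ≠ 0 ∧ f = fun v => c • v + z},
        ∃ ℓ : Set (Fin 2 → F), IsAffineLine ℓ ∧ f '' ℓ = g '' ℓ) := by
  refine ⟨fun c hc z => ?_, ?_, ?_⟩
  · obtain ⟨u, w, hw, hfix⟩ := exists_image_dilatation_mk'_span_eq hc z
    exact ⟨_, isAffineLine_mk'_span u hw, hfix⟩
  · have hunits : Nat.card Fˣ = q - 1 := by
      rw [Nat.card_units, Nat.card_eq_fintype_card, hF]
    have hplane : Nat.card (Fin 2 → F) = q ^ 2 := by
      rw [Nat.card_fun, Nat.card_eq_fintype_card, hF, Nat.card_fin]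
    rw [mul_comm, ← hunits, ← hplane]
    exact ncard_setOf_dilatation
  · rintro _ ⟨c, z, hc, rfl⟩ _ ⟨d, y, hd, rfl⟩
    obtain ⟨u, w, hw, himage⟩ :=
      exists_image_dilatation_mk'_span_eq_image_dilatation hc hd z y
    exact ⟨_, isAffineLine_mk'_span u hw, himage⟩
end

section
/- Let q be a prime power and F a finite field with q elements. Let S ⊆ GL(2,F) be such that for all M, N ∈ S the matrix N⁻¹M has two linearly independent eigenvectors in F². Then the set T = {v ↦ c•(M v) + z : M ∈ S, c ∈ F \ {0}, z ∈ F²} of affine maps is an intersecting set for the action of AGL(2,F) on affine lines: for any two elements f, g of T there exists an affine line ℓ of F² with f(ℓ) = g(ℓ). -/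
/-!
Affine bijections `f`, `g` map a line to the same line exactly when `g⁻¹ ∘ f` maps it to itself, so
it suffices that an affine bijection `h` with diagonalizable linear part `L` fixes a line. An
eigenvector of `L` lies in the kernel of `L - 1` if its eigenvalue is `1` and in the range of
`L - 1` otherwise, so these two subspaces span. Hence moving the base point `p` changes the
displacement `h p - p` into a vector fixed by `L`. If that vector is nonzero, the line through `p`
in its direction is fixed by `h`; if it is zero, `p` is a fixed point and every line through `p`
along an eigenvector is fixed. The scalars `c` do not matter, since scaling preserves
diagonalizability.
-/

open Module Module.End
open Matrix.GeneralLinearGroup (toLin)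

section EigenspaceRing

variable {R M : Type*} [CommRing R] [AddCommGroup M] [Module R M]

lemma exists_hasEigenvector_of_iSup_eigenspace_eq_top [Nontrivial M] {L : End R M}
    (hL : ⨆ μ, L.eigenspace μ = ⊤) : ∃ μ w, L.HasEigenvector μ w := by
  have hne : ⨆ μ, L.eigenspace μ ≠ ⊥ := hL ▸ top_ne_bot
  obtain ⟨μ, hμ⟩ : ∃ μ, L.eigenspace μ ≠ ⊥ := by
    simpa only [ne_eq, iSup_eq_bot, not_forall] using hne
  exact ⟨μ, HasEigenvalue.exists_hasEigenvector hμ⟩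

lemma iSup_eigenspace_le_iSup_eigenspace_smul (a : R) (L : End R M) :
    ⨆ μ, L.eigenspace μ ≤ ⨆ μ, (a • L).eigenspace μ := by
  refine iSup_le fun μ ↦ le_iSup_of_le (a * μ) fun v hv ↦ ?_
  rw [mem_eigenspace_iff] at hv ⊢
  rw [LinearMap.smul_apply, hv, mul_smul]

lemma iSup_eigenspace_eq_top_of_span_eq_top {ι : Type*} {L : End R M} {v : ι → M} {μ : ι → R}
    (hspan : Submodule.span R (Set.range v) = ⊤) (hv : ∀ i, L (v i) = μ i • v i) :
    ⨆ μ, L.eigenspace μ = ⊤ := by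
  rw [← top_le_iff, ← hspan, Submodule.span_le]
  rintro _ ⟨i, rfl⟩
  exact Submodule.mem_iSup_of_mem (μ i) (mem_eigenspace_iff.mpr (hv i))

end EigenspaceRing

section EigenspaceField

variable {k V : Type*} [Field k] [AddCommGroup V] [Module k V]

lemma eigenspace_le_ker_sup_range_sub_one (L : End k V) (μ : k) :
    L.eigenspace μ ≤ LinearMap.ker (L - 1) ⊔ LinearMap.range (L - 1) := by
  intro v hv
  have hLv : (L - 1) v = (μ - 1) • v := by
    simp [mem_eigenspace_iff.mp hv, sub_smul]
  obtain rfl | hμ := eq_or_ne μ 1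
  · exact Submodule.mem_sup_left (by simpa using hLv)
  · refine Submodule.mem_sup_right ⟨(μ - 1)⁻¹ • v, ?_⟩
    rw [map_smul, hLv, inv_smul_smul₀ (sub_ne_zero.mpr hμ)]

lemma ker_sup_range_sub_one_eq_top {L : End k V} (hL : ⨆ μ, L.eigenspace μ = ⊤) :
    LinearMap.ker (L - 1) ⊔ LinearMap.range (L - 1) = ⊤ :=
  top_le_iff.mp (hL ▸ iSup_le (eigenspace_le_ker_sup_range_sub_one L))

lemma iSup_eigenspace_eq_top_of_linearIndependent_pair (hV : finrank k V = 2) {L : End k V}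
    {v₁ v₂ : V} {μ₁ μ₂ : k} (hv : LinearIndependent k ![v₁, v₂]) (h₁ : L v₁ = μ₁ • v₁)
    (h₂ : L v₂ = μ₂ • v₂) : ⨆ μ, L.eigenspace μ = ⊤ := by
  have hspan := hv.span_eq_top_of_card_eq_finrank (by simp [hV])
  refine iSup_eigenspace_eq_top_of_span_eq_top (μ := ![μ₁, μ₂]) hspan ?_
  exact Fin.forall_fin_two.mpr ⟨h₁, h₂⟩

end EigenspaceField

section Displacement

variable {k V P : Type*} [Ring k] [AddCommGroup V] [Module k V] [AddTorsor V P]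

lemma exists_vsub_mem_ker_linear_sub_one (f : P →ᵃ[k] P)
    (hf : LinearMap.ker (f.linear - 1) ⊔ LinearMap.range (f.linear - 1) = ⊤) :
    ∃ p, f p -ᵥ p ∈ LinearMap.ker (f.linear - 1) := by
  obtain ⟨p₀⟩ : Nonempty P := inferInstance
  obtain ⟨w, hw, _, ⟨v, rfl⟩, hwv⟩ :=
    Submodule.mem_sup.mp (hf ▸ Submodule.mem_top : f p₀ -ᵥ p₀ ∈ _)
  refine ⟨-v +ᵥ p₀, ?_⟩
  have hdisp : f (-v +ᵥ p₀) -ᵥ (-v +ᵥ p₀) = w := by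
    rw [f.map_vadd, vadd_vsub_vadd_comm, ← hwv, map_neg, LinearMap.sub_apply, End.one_apply]
    abel
  rwa [hdisp]

end Displacement

section FixedLine

variable {k V P : Type*} [Field k] [AddCommGroup V] [Module k V] [AddTorsor V P]

lemma exists_hasEigenvector_vsub_mem_span [Nontrivial V] (f : P →ᵃ[k] P)
    (hf : ⨆ μ, End.eigenspace f.linear μ = ⊤) :
    ∃ p μ w, End.HasEigenvector f.linear μ w ∧ f p -ᵥ p ∈ k ∙ w := by
  obtain ⟨p, hp⟩ := exists_vsub_mem_ker_linear_sub_one f (ker_sup_range_sub_one_eq_top hf)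
  obtain hfix | hmove := eq_or_ne (f p -ᵥ p) 0
  · obtain ⟨μ, w, hw⟩ := exists_hasEigenvector_of_iSup_eigenspace_eq_top hf
    exact ⟨p, μ, w, hw, hfix ▸ Submodule.zero_mem _⟩
  · have hone : f p -ᵥ p ∈ End.eigenspace f.linear 1 := by
      simpa [mem_eigenspace_iff, sub_eq_zero] using hp
    exact ⟨p, 1, f p -ᵥ p, ⟨hone, hmove⟩, Submodule.mem_span_singleton_self _⟩

lemma map_mk'_span_singleton_eq_self (f : P ≃ᵃ[k] P) {p : P} {μ : k} {w : V}
    (hw : End.HasEigenvector (f.linear : End k V) μ w) (hp : f p -ᵥ p ∈ k ∙ w) :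
    (AffineSubspace.mk' p (k ∙ w)).map (f : P →ᵃ[k] P) = AffineSubspace.mk' p (k ∙ w) := by
  have hfw : f.linear w = μ • w := hw.apply_eq_smul
  have hμ : μ ≠ 0 := by
    rintro rfl
    exact hw.2 (by simpa using hfw)
  refine AffineSubspace.ext_of_direction_eq ?_ ⟨f p, ?_, AffineSubspace.mem_mk'.mpr hp⟩
  · rw [AffineSubspace.map_direction, AffineSubspace.direction_mk', LinearMap.map_span,
      Set.image_singleton, AffineEquiv.linear_toAffineMap, LinearEquiv.coe_coe, hfw,
      Submodule.span_singleton_smul_eq (isUnit_iff_ne_zero.mpr hμ)]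
  · exact AffineSubspace.mem_map_of_mem _ (AffineSubspace.self_mem_mk' p _)

lemma exists_line_map_eq_self [Nontrivial V] (f : P ≃ᵃ[k] P)
    (hf : ⨆ μ, End.eigenspace (f.linear : End k V) μ = ⊤) :
    ∃ ℓ : AffineSubspace k P, finrank k ℓ.direction = 1 ∧ ℓ.map (f : P →ᵃ[k] P) = ℓ := by
  obtain ⟨p, μ, w, hw, hp⟩ := exists_hasEigenvector_vsub_mem_span (f : P →ᵃ[k] P) hf
  refine ⟨AffineSubspace.mk' p (k ∙ w), ?_, map_mk'_span_singleton_eq_self f hw hp⟩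
  rw [AffineSubspace.direction_mk', finrank_span_singleton hw.2]

lemma exists_line_image_eq_image [Nontrivial V] (f g : P ≃ᵃ[k] P)
    (hfg : ⨆ μ, End.eigenspace ((g⁻¹ * f).linear : End k V) μ = ⊤) :
    ∃ ℓ : AffineSubspace k P, finrank k ℓ.direction = 1 ∧ f '' ℓ = g '' ℓ := by
  obtain ⟨ℓ, hℓ, hmap⟩ := exists_line_map_eq_self (g⁻¹ * f) hfg
  have himage : (g⁻¹ * f) '' ℓ = ℓ := congrArg SetLike.coe hmap
  refine ⟨ℓ, hℓ, ?_⟩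
  calc f '' ℓ = (g * (g⁻¹ * f)) '' ℓ := by rw [mul_inv_cancel_left]
    _ = g '' ((g⁻¹ * f) '' ℓ) := by rw [AffineEquiv.coe_mul, Set.image_comp]
    _ = g '' ℓ := by rw [himage]

end FixedLine

section SMulAddEquiv

variable {k V : Type*} [CommRing k] [AddCommGroup V] [Module k V]

/-- The affine bijection `v ↦ c • M v + z`, a general element of the set of maps shown to be
intersecting. The scalar is a unit, so that `c • M` is again in the general linear group. -/
def smulAddEquiv (c : kˣ) (M : LinearMap.GeneralLinearGroup k V) (z : V) : V ≃ᵃ[k] V :=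
  AffineEquiv.ofLinearEquiv (c • M).toLinearEquiv 0 z

lemma coe_smulAddEquiv (c : kˣ) (M : LinearMap.GeneralLinearGroup k V) (z : V) :
    ⇑(smulAddEquiv c M z) = fun v ↦ (c : k) • (M : End k V) v + z := by
  ext v
  simp [smulAddEquiv, Units.smul_def]

lemma linear_smulAddEquiv_inv_mul (c d : kˣ) (M N : LinearMap.GeneralLinearGroup k V) (y z : V) :
    (((smulAddEquiv d N y)⁻¹ * smulAddEquiv c M z).linear : End k V) =
      ((c * d⁻¹ : kˣ) : k) • ((N⁻¹ * M : LinearMap.GeneralLinearGroup k V) : End k V) := by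
  have hlin : ((smulAddEquiv d N y)⁻¹ * smulAddEquiv c M z).linear =
      ((d • N)⁻¹ * c • M).toLinearEquiv := rfl
  rw [hlin]
  ext v
  simp [Units.smul_def, mul_smul]

end SMulAddEquiv

section ScaledCosets

variable {k V : Type*} [Field k] [AddCommGroup V] [Module k V]

theorem cosets_of_two_intersecting_set_intersecting_general [Nontrivial V]
    (S : Set (LinearMap.GeneralLinearGroup k V))
    (hS : ∀ M ∈ S, ∀ N ∈ S,
      ⨆ μ, End.eigenspace ((N⁻¹ * M : LinearMap.GeneralLinearGroup k V) : End k V) μ = ⊤) :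
    ∀ f ∈ {f : V → V | ∃ M ∈ S, ∃ (c : k) (z : V),
        c ≠ 0 ∧ f = fun v ↦ c • (M : End k V) v + z},
      ∀ g ∈ {f : V → V | ∃ M ∈ S, ∃ (c : k) (z : V),
        c ≠ 0 ∧ f = fun v ↦ c • (M : End k V) v + z},
        ∃ ℓ : AffineSubspace k V, finrank k ℓ.direction = 1 ∧ f '' ℓ = g '' ℓ := by
  rintro _ ⟨M, hM, c, z, hc, rfl⟩ _ ⟨N, hN, d, y, hd, rfl⟩
  lift c to kˣ using hc.isUnit
  lift d to kˣ using hd.isUnit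
  simp only [← coe_smulAddEquiv]
  apply exists_line_image_eq_image
  rw [linear_smulAddEquiv_inv_mul, ← top_le_iff, ← hS M hM N hN]
  exact iSup_eigenspace_le_iSup_eigenspace_smul _ _

end ScaledCosets

section Plane

variable {F : Type*} [Field F]

lemma isAffineLine_of_finrank_direction_eq_one {ℓ : AffineSubspace F (Fin 2 → F)}
    (hℓ : finrank F ℓ.direction = 1) : IsAffineLine (ℓ : Set (Fin 2 → F)) := by
  have hdir : ℓ.direction ≠ ⊥ := (Submodule.isAtom_iff_finrank_eq_one.mpr hℓ).ne_bot
  obtain ⟨w, hwℓ, hw⟩ := ℓ.direction.ne_bot_iff.mp hdir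
  obtain ⟨u, hu⟩ : (ℓ : Set (Fin 2 → F)).Nonempty := by
    rw [AffineSubspace.nonempty_iff_ne_bot]
    rintro rfl
    exact hdir (AffineSubspace.direction_bot _ _ _)
  refine ⟨u, w, hw, Set.ext fun p ↦ ?_⟩
  rw [SetLike.mem_coe, ← AffineSubspace.vsub_right_mem_direction_iff_mem hu,
    eq_span_singleton_of_mem_of_finrank_eq_one hℓ hwℓ hw, Submodule.mem_span_singleton]
  simp only [vsub_eq_sub, eq_sub_iff_add_eq', eq_comm, Set.mem_ofPred_eq]

end Plane

/-- If `S ⊆ GL(2,F)` is such that `N⁻¹ M` has two linearly independent eigenvectors for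
all `M, N ∈ S`, then the set of affine maps `v ↦ c • (M v) + z` with `M ∈ S`, `c ≠ 0`,
is an intersecting set for the action of `AGL(2,F)` on affine lines. -/
theorem cosets_of_two_intersecting_set_intersecting (q : ℕ) (hq : IsPrimePow q)
    (F : Type*) [Field F] [Fintype F] (hF : Fintype.card F = q)
    (S : Set (GL (Fin 2) F))
    (hS : ∀ M ∈ S, ∀ N ∈ S, ∃ (v₁ v₂ : Fin 2 → F) (c₁ c₂ : F),
      LinearIndependent F ![v₁, v₂] ∧
      ((N⁻¹ * M : GL (Fin 2) F) : Matrix (Fin 2) (Fin 2) F).mulVec v₁ = c₁ • v₁ ∧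
      ((N⁻¹ * M : GL (Fin 2) F) : Matrix (Fin 2) (Fin 2) F).mulVec v₂ = c₂ • v₂) :
    ∀ f ∈ {f : (Fin 2 → F) → (Fin 2 → F) | ∃ M ∈ S, ∃ (c : F) (z : Fin 2 → F),
        c ≠ 0 ∧ f = fun v => c • ((M : Matrix (Fin 2) (Fin 2) F).mulVec v) + z},
      ∀ g ∈ {f : (Fin 2 → F) → (Fin 2 → F) | ∃ M ∈ S, ∃ (c : F) (z : Fin 2 → F),
        c ≠ 0 ∧ f = fun v => c • ((M : Matrix (Fin 2) (Fin 2) F).mulVec v) + z},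
        ∃ ℓ : Set (Fin 2 → F), IsAffineLine ℓ ∧ f '' ℓ = g '' ℓ := by
  have hdiag : ∀ M ∈ toLin '' S, ∀ N ∈ toLin '' S,
      ⨆ μ, End.eigenspace (N⁻¹ * M).val μ = ⊤ := by
    rintro _ ⟨M, hM, rfl⟩ _ ⟨N, hN, rfl⟩
    obtain ⟨v₁, v₂, c₁, c₂, hv, h₁, h₂⟩ := hS M hM N hN
    rw [← map_inv, ← map_mul]
    exact iSup_eigenspace_eq_top_of_linearIndependent_pair (finrank_fin_fun F) hv h₁ h₂
  rintro _ ⟨M, hM, c, z, hc, rfl⟩ _ ⟨N, hN, d, y, hd, rfl⟩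
  obtain ⟨ℓ, hℓ, hfg⟩ := cosets_of_two_intersecting_set_intersecting_general (toLin '' S) hdiag
    _ ⟨toLin M, ⟨M, hM, rfl⟩, c, z, hc, rfl⟩ _ ⟨toLin N, ⟨N, hN, rfl⟩, d, y, hd, rfl⟩
  exact ⟨ℓ, isAffineLine_of_finrank_direction_eq_one hℓ, hfg⟩
end

section
/- Let q be a prime power and F a finite field with q elements. If q is odd, there exists a set S ⊆ GL(2,F) of size (3q−5)/2 such that no two distinct elements of S are scalar multiples of one another and, for all M, N ∈ S, the matrix N⁻¹M has two linearly independent eigenvectors in F² (equivalently, the images of M and N in PGL(2,q) agree on at least two points of the projective line, so S projects to a 2-intersecting set in PGL(2,q) of size (3q−5)/2). If q is even, such a set exists with size (3q−4)/2. -/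
/-!
Let `w₀, w₁, w₂` be `e₁, e₂, e₁ + e₂`, indexed modulo `3`, and let `g i a` be the linear map
multiplying `wᵢ` by `a` and fixing `wᵢ₊₁`, so that `det (g i a) = a`. For any two of these maps `M`
and `N`, one of the `wₖ` is an eigenvector of `N⁻¹ M`, and its determinant then gives the second
eigenvalue: the eigenvalues are `1, a / b` for `g i a, g i b`, and `a, b⁻¹` for `g i a, g j b` with
`i ≠ j`. When they are distinct, `N⁻¹ M` is diagonalizable and not scalar. So it suffices to find
many pairs `(i, a)` such that `a * b ≠ 1` whenever `i ≠ j`. Choose `A` to contain one element of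
each pair `{a, a⁻¹}` of distinct units: use all of `A` for every `i`, and for a single `i` also the
units equal to their own inverse.
-/

open Matrix

namespace TwoIntersecting

theorem inv_mul_mulVec_eq_smul {R n : Type*} [CommRing R] [Fintype n] [DecidableEq n]
    {M N : GL n R} {v : n → R} {c : R}
    (h : (M : Matrix n n R) *ᵥ v = c • (N : Matrix n n R) *ᵥ v) :
    ((N⁻¹ * M : GL n R) : Matrix n n R) *ᵥ v = c • v := by
  rw [Units.val_mul, ← mulVec_mulVec, h, mulVec_smul, mulVec_mulVec, Units.inv_mul, one_mulVec]

section DistinctEigenvalues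

variable {R n : Type*} [CommRing R] [IsDomain R] [Fintype n]

/-- The matrix `A` has two distinct eigenvalues in the base ring. For a `2 × 2` matrix over a field
this says that `A` is diagonalizable and not scalar. -/
def HasDistinctEigenvalues (A : Matrix n n R) : Prop :=
  ∃ c d : R, c ≠ d ∧ (∃ v ≠ 0, A *ᵥ v = c • v) ∧ ∃ w ≠ 0, A *ᵥ w = d • w

namespace HasDistinctEigenvalues

theorem exists_linearIndependent {A : Matrix n n R} (hA : HasDistinctEigenvalues A) :
    ∃ (v₁ v₂ : n → R) (c₁ c₂ : R), LinearIndependent R ![v₁, v₂] ∧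
      A *ᵥ v₁ = c₁ • v₁ ∧ A *ᵥ v₂ = c₂ • v₂ := by
  obtain ⟨c, d, hcd, ⟨v, hv, hAv⟩, w, hw, hAw⟩ := hA
  refine ⟨v, w, c, d, ?_, hAv, hAw⟩
  refine Module.End.eigenvectors_linearIndependent' A.mulVecLin ![c, d] ?_ _ fun i => ?_
  · simpa [Function.Injective, Fin.forall_fin_two] using ⟨hcd, hcd.symm⟩
  · rw [Module.End.hasEigenvector_iff, Module.End.mem_eigenspace_iff]
    fin_cases i
    exacts [⟨hAv, hv⟩, ⟨hAw, hw⟩]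

theorem ne_smul_one [DecidableEq n] {A : Matrix n n R} (hA : HasDistinctEigenvalues A) (k : R) :
    A ≠ k • 1 := by
  rintro rfl
  obtain ⟨c, d, hcd, ⟨v, hv, hkv⟩, w, hw, hkw⟩ := hA
  simp only [smul_mulVec, one_mulVec] at hkv hkw
  exact hcd ((smul_left_injective R hv hkv).symm.trans (smul_left_injective R hw hkw))

theorem ne_smul [DecidableEq n] {M N : GL n R}
    (h : HasDistinctEigenvalues ((N⁻¹ * M : GL n R) : Matrix n n R)) (k : R) :
    (M : Matrix n n R) ≠ k • (N : Matrix n n R) := by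
  intro hMN
  apply h.ne_smul_one k
  rw [Units.val_mul, hMN, Matrix.mul_smul, Units.inv_mul]

end HasDistinctEigenvalues

theorem exists_mulVec_eq_smul_iff_det_sub [DecidableEq n] {A : Matrix n n R} {c : R} :
    (∃ v ≠ 0, A *ᵥ v = c • v) ↔ (A - c • 1).det = 0 := by
  simp only [← exists_mulVec_eq_zero_iff, sub_mulVec, smul_mulVec, one_mulVec, sub_eq_zero]

theorem hasDistinctEigenvalues_of_det_eq_mul {A : Matrix (Fin 2) (Fin 2) R} {v : Fin 2 → R}
    {c d : R} (hv : v ≠ 0) (hAv : A *ᵥ v = c • v) (hdet : A.det = c * d) (hc : c ≠ 0)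
    (hcd : c ≠ d) : HasDistinctEigenvalues A := by
  have det_sub (x : R) : (A - x • 1).det = x ^ 2 - A.trace * x + A.det := by
    simp only [det_fin_two, trace_fin_two, Matrix.sub_apply, Matrix.smul_apply, smul_eq_mul,
      one_apply_eq, one_apply_ne zero_ne_one, one_apply_ne one_ne_zero]
    ring
  have hc_root : (A - c • 1).det = 0 := exists_mulVec_eq_smul_iff_det_sub.mp ⟨v, hv, hAv⟩
  have htrace : A.trace = c + d := by
    rw [det_sub, hdet] at hc_root
    exact mul_left_cancel₀ hc (by linear_combination -hc_root)
  refine ⟨c, d, hcd, ⟨v, hv, hAv⟩, exists_mulVec_eq_smul_iff_det_sub.mpr ?_⟩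
  rw [det_sub, htrace, hdet]
  ring

theorem hasDistinctEigenvalues_inv_mul {M N : GL (Fin 2) R} {v : Fin 2 → R} {c d : R}
    (hv : v ≠ 0)
    (hMN : (M : Matrix (Fin 2) (Fin 2) R) *ᵥ v = c • (N : Matrix (Fin 2) (Fin 2) R) *ᵥ v)
    (hdet : (M : Matrix (Fin 2) (Fin 2) R).det = c * d * (N : Matrix (Fin 2) (Fin 2) R).det)
    (hcd : c ≠ d) :
    HasDistinctEigenvalues ((N⁻¹ * M : GL (Fin 2) R) : Matrix (Fin 2) (Fin 2) R) := by
  have hc : c ≠ 0 := by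
    rintro rfl
    exact M.det_ne_zero (by rw [hdet, zero_mul, zero_mul])
  refine hasDistinctEigenvalues_of_det_eq_mul hv (inv_mul_mulVec_eq_smul hMN) ?_ hc hcd
  rw [Units.val_mul, det_mul, hdet, mul_left_comm, ← det_mul, Units.inv_mul, det_one, mul_one]

theorem exists_linearIndependent_inv_mul {M N : GL (Fin 2) R}
    (h : M ≠ N →
      HasDistinctEigenvalues ((N⁻¹ * M : GL (Fin 2) R) : Matrix (Fin 2) (Fin 2) R)) :
    ∃ (v₁ v₂ : Fin 2 → R) (c₁ c₂ : R), LinearIndependent R ![v₁, v₂] ∧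
      ((N⁻¹ * M : GL (Fin 2) R) : Matrix (Fin 2) (Fin 2) R) *ᵥ v₁ = c₁ • v₁ ∧
      ((N⁻¹ * M : GL (Fin 2) R) : Matrix (Fin 2) (Fin 2) R) *ᵥ v₂ = c₂ • v₂ := by
  obtain rfl | hne := eq_or_ne M N
  · refine ⟨![1, 0], ![0, 1], 1, 1, ?_, by simp, by simp⟩
    simp [LinearIndependent.pair_iff]
  · exact (h hne).exists_linearIndependent

end DistinctEigenvalues

section Frame

/-- The vectors `e₁, e₂, e₁ + e₂`, representing three points of the projective line. -/
def frameVec (R : Type*) [CommRing R] : Fin 3 → Fin 2 → R :=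
  ![![1, 0], ![0, 1], ![1, 1]]

/-- The matrix that multiplies `frameVec R i` by `a` and fixes `frameVec R (i + 1)`. -/
def frameMatrix {R : Type*} [CommRing R] (i : Fin 3) (a : R) : Matrix (Fin 2) (Fin 2) R :=
  ![!![a, 0; 0, 1], !![1, 0; 1 - a, a], !![1, a - 1; 0, a]] i

section CommRing

variable {R : Type*} [CommRing R]

theorem frameVec_ne_zero [Nontrivial R] (i : Fin 3) : frameVec R i ≠ 0 := by
  fin_cases i <;> simp [frameVec]

theorem det_frameMatrix (i : Fin 3) (a : R) : (frameMatrix i a).det = a := by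
  fin_cases i <;> simp [frameMatrix, det_fin_two]

theorem frameMatrix_mulVec_frameVec (i : Fin 3) (a : R) :
    frameMatrix i a *ᵥ frameVec R i = a • frameVec R i := by
  fin_cases i <;> ext k <;> fin_cases k <;> simp [frameMatrix, frameVec, mulVec, dotProduct]

theorem frameMatrix_mulVec_frameVec_add_one (i : Fin 3) (a : R) :
    frameMatrix i a *ᵥ frameVec R (i + 1) = frameVec R (i + 1) := by
  fin_cases i <;> ext k <;> fin_cases k <;> simp [frameMatrix, frameVec, mulVec, dotProduct]

/-- `frameMatrix` with unit parameter, as an element of the general linear group. -/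
noncomputable def frameGL (p : Fin 3 × Rˣ) : GL (Fin 2) R :=
  GeneralLinearGroup.mk'' (frameMatrix p.1 (p.2 : R)) (by
    rw [det_frameMatrix]
    exact p.2.isUnit)

theorem coe_frameGL (p : Fin 3 × Rˣ) :
    (frameGL p : Matrix (Fin 2) (Fin 2) R) = frameMatrix p.1 (p.2 : R) := rfl

end CommRing

variable {R : Type*} [CommRing R] [IsDomain R]

theorem hasDistinctEigenvalues_frameGL_same (i : Fin 3) {a b : Rˣ} (hab : a ≠ b) :
    HasDistinctEigenvalues
      (((frameGL (i, b))⁻¹ * frameGL (i, a) : GL (Fin 2) R) : Matrix (Fin 2) (Fin 2) R) := by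
  apply hasDistinctEigenvalues_inv_mul (c := (1 : R)) (d := ↑(a / b)) (frameVec_ne_zero (i + 1))
  · simp only [coe_frameGL, frameMatrix_mulVec_frameVec_add_one, one_smul]
  · rw [coe_frameGL, coe_frameGL, det_frameMatrix, det_frameMatrix, one_mul, ← Units.val_mul,
      div_mul_cancel]
  · rw [ne_comm, ne_eq, Units.val_eq_one, div_eq_one]
    exact hab

theorem hasDistinctEigenvalues_frameGL_add_one (i : Fin 3) {a b : Rˣ} (hab : a * b ≠ 1) :
    HasDistinctEigenvalues
      (((frameGL (i + 1, b))⁻¹ * frameGL (i, a) : GL (Fin 2) R) : Matrix (Fin 2) (Fin 2) R) := by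
  apply hasDistinctEigenvalues_inv_mul (c := (↑b⁻¹ : R)) (d := a) (frameVec_ne_zero (i + 1))
  · simp only [coe_frameGL, frameMatrix_mulVec_frameVec_add_one, frameMatrix_mulVec_frameVec,
      smul_smul, Units.inv_mul, one_smul]
  · rw [coe_frameGL, coe_frameGL, det_frameMatrix, det_frameMatrix, mul_right_comm, Units.inv_mul,
      one_mul]
  · rw [ne_comm, ne_eq, Units.val_inj, eq_inv_iff_mul_eq_one]
    exact hab

theorem hasDistinctEigenvalues_frameGL_add_one_left (i : Fin 3) {a b : Rˣ} (hab : a * b ≠ 1) :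
    HasDistinctEigenvalues
      (((frameGL (i, b))⁻¹ * frameGL (i + 1, a) : GL (Fin 2) R) : Matrix (Fin 2) (Fin 2) R) := by
  apply hasDistinctEigenvalues_inv_mul (c := (a : R)) (d := ↑b⁻¹) (frameVec_ne_zero (i + 1))
  · simp only [coe_frameGL, frameMatrix_mulVec_frameVec_add_one, frameMatrix_mulVec_frameVec]
  · simp [coe_frameGL, det_frameMatrix]
  · rw [ne_eq, Units.val_inj, eq_inv_iff_mul_eq_one]
    exact hab

theorem hasDistinctEigenvalues_frameGL {p r : Fin 3 × Rˣ} (hpr : p ≠ r)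
    (hmul : p.1 ≠ r.1 → p.2 * r.2 ≠ 1) :
    HasDistinctEigenvalues
      (((frameGL r)⁻¹ * frameGL p : GL (Fin 2) R) : Matrix (Fin 2) (Fin 2) R) := by
  obtain ⟨i, a⟩ := p
  obtain ⟨j, b⟩ := r
  have cyclic : ∀ i j : Fin 3, i = j ∨ j = i + 1 ∨ i = j + 1 := by decide
  obtain rfl | rfl | rfl := cyclic i j
  · exact hasDistinctEigenvalues_frameGL_same i fun hab => hpr (by rw [hab])
  · exact hasDistinctEigenvalues_frameGL_add_one i (hmul (by simp))
  · exact hasDistinctEigenvalues_frameGL_add_one_left j (hmul (by simp))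

end Frame

theorem exists_half_of_involutive {α : Type*} [Finite α] {f : α → α}
    (hf : Function.Involutive f) :
    ∃ A : Set α, (∀ x ∈ A, f x ∉ A) ∧
      2 * A.ncard + (Function.fixedPoints f).ncard = Nat.card α := by
  classical
  let : LinearOrder α := IsWellOrder.linearOrder WellOrderingRel
  let A : Set α := {x | x < f x}
  have mem_image (x : α) : x ∈ f '' A ↔ f x < x := by
    rw [hf.image_eq_preimage_symm, Set.mem_preimage, Set.mem_ofPred_eq, hf]
  refine ⟨A, fun x hx hfx => ?_, ?_⟩
  · exact lt_asymm hx (by simpa only [A, Set.mem_ofPred_eq, hf x] using hfx)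
  have hdisj : Disjoint A (f '' A) :=
    Set.disjoint_left.mpr fun x hx hfx => lt_asymm hx ((mem_image x).mp hfx)
  have hcompl : (A ∪ f '' A)ᶜ = Function.fixedPoints f := by
    ext x
    rw [Set.mem_compl_iff, Set.mem_union, mem_image, Set.mem_ofPred_eq, ← ne_iff_lt_or_gt, not_not,
      Function.mem_fixedPoints_iff, eq_comm]
  calc 2 * A.ncard + (Function.fixedPoints f).ncard
      = (A ∪ f '' A).ncard + (A ∪ f '' A)ᶜ.ncard := by
        rw [Set.ncard_union_eq hdisj, Set.ncard_image_of_injective _ hf.injective, hcompl, two_mul]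
    _ = Nat.card α := Set.ncard_add_ncard_compl _

theorem exists_set_prod_mul_ne_one (ι G : Type*) [Finite ι] [Nonempty ι] [Group G] [Finite G] :
    ∃ T : Set (ι × G), (∀ p ∈ T, ∀ r ∈ T, p.1 ≠ r.1 → p.2 * r.2 ≠ 1) ∧
      2 * T.ncard + Nat.card ι * {g : G | g⁻¹ = g}.ncard =
        Nat.card ι * Nat.card G + 2 * {g : G | g⁻¹ = g}.ncard := by
  obtain ⟨A, hA, hcard⟩ := exists_half_of_involutive (inv_involutive (G := G))
  let i₀ : ι := Classical.arbitrary ι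
  let I : Set G := {g | g⁻¹ = g}
  refine ⟨Set.univ ×ˢ A ∪ {i₀} ×ˢ I, ?_, ?_⟩
  · rintro ⟨i, a⟩ hp ⟨j, b⟩ hr hij hab
    obtain rfl : a = b⁻¹ := eq_inv_of_mul_eq_one_left hab
    simp only [Set.mem_union, Set.mem_prod, Set.mem_univ, true_and, Set.mem_singleton_iff] at hp hr
    rcases hp with hbA' | ⟨rfl, hbI'⟩ <;> rcases hr with hbA | ⟨rfl, hbI⟩
    · exact hA b hbA hbA'
    · exact hA b⁻¹ hbA' (by rwa [inv_inv, ← hbI])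
    · exact hA b hbA (by rwa [inv_inj.mp hbI'])
    · exact hij rfl
  · have hdisj : Disjoint (Set.univ ×ˢ A) ({i₀} ×ˢ I) :=
      Set.disjoint_prod.mpr <| .inr <| Set.disjoint_left.mpr fun g hgA hgI =>
        hA g hgA (by rwa [hgI])
    rw [Set.ncard_union_eq hdisj, Set.ncard_prod, Set.ncard_prod, Set.ncard_univ,
      Set.ncard_singleton, ← hcard]
    change _ = Nat.card ι * (2 * A.ncard + I.ncard) + 2 * I.ncard
    ring

theorem exists_pairwise_hasDistinctEigenvalues (F : Type*) [Field F] [Finite F] :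
    ∃ S : Set (GL (Fin 2) F),
      (S.Pairwise fun M N =>
        HasDistinctEigenvalues ((N⁻¹ * M : GL (Fin 2) F) : Matrix (Fin 2) (Fin 2) F)) ∧
      2 * S.ncard + {u : Fˣ | u⁻¹ = u}.ncard + 3 = 3 * Nat.card F := by
  obtain ⟨T, hT, hcard⟩ := exists_set_prod_mul_ne_one (Fin 3) Fˣ
  have hdistinct : T.Pairwise fun p r => HasDistinctEigenvalues
      (((frameGL r)⁻¹ * frameGL p : GL (Fin 2) F) : Matrix (Fin 2) (Fin 2) F) :=
    fun p hp r hr hpr => hasDistinctEigenvalues_frameGL hpr (hT p hp r hr)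
  have hinj : T.InjOn frameGL := fun p hp r hr hpr => by
    by_contra hne
    exact (hdistinct hp hr hne).ne_smul 1 (by rw [hpr, one_smul])
  refine ⟨frameGL '' T, hinj.pairwise_image.mpr hdistinct, ?_⟩
  rw [hinj.ncard_image]
  have hunits : Nat.card F = Nat.card Fˣ + 1 := Nat.card_eq_card_units_add_one F
  rw [Nat.card_fin] at hcard
  omega

theorem setOf_units_inv_eq_self (R : Type*) [Ring R] [NoZeroDivisors R] :
    {u : Rˣ | u⁻¹ = u} = {1, -1} :=
  Set.ext Units.inv_eq_self_iff

theorem ncard_units_inv_eq_self_of_ringChar_ne_two {R : Type*} [Ring R] [NoZeroDivisors R]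
    [Nontrivial R] (h : ringChar R ≠ 2) : {u : Rˣ | u⁻¹ = u}.ncard = 2 := by
  rw [setOf_units_inv_eq_self, Set.ncard_pair]
  intro h_one
  exact Ring.neg_one_ne_one_of_char_ne_two h (congrArg Units.val h_one).symm

theorem ncard_units_inv_eq_self_of_ringChar_eq_two {R : Type*} [Ring R] [NoZeroDivisors R]
    (h : ringChar R = 2) : {u : Rˣ | u⁻¹ = u}.ncard = 1 := by
  have : CharP R 2 := ringChar.of_eq h
  have h_one : (-1 : Rˣ) = 1 := Units.ext (CharTwo.neg_eq 1)
  rw [setOf_units_inv_eq_self, h_one, Set.pair_eq_singleton, Set.ncard_singleton]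

end TwoIntersecting

/-- **2-intersecting sets in PGL(2,q) (Theorem 5.8).**  There is a set `S ⊆ GL(2,F)` of
pairwise non-proportional matrices such that `N⁻¹ M` has two linearly independent
eigenvectors for all `M, N ∈ S` (so `S` projects to a 2-intersecting set in `PGL(2,q)`),
of size `(3q-5)/2` when `q` is odd and `(3q-4)/2` when `q` is even. -/
theorem pgl2_two_intersecting_construction (q : ℕ) (hq : IsPrimePow q)
    (F : Type*) [Field F] [Fintype F] (hF : Fintype.card F = q) :
    (Odd q → ∃ S : Set (GL (Fin 2) F),
      (∀ M ∈ S, ∀ N ∈ S, M ≠ N → ∀ c : F,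
        (M : Matrix (Fin 2) (Fin 2) F) ≠ c • (N : Matrix (Fin 2) (Fin 2) F)) ∧
      (∀ M ∈ S, ∀ N ∈ S, ∃ (v₁ v₂ : Fin 2 → F) (c₁ c₂ : F),
        LinearIndependent F ![v₁, v₂] ∧
        ((N⁻¹ * M : GL (Fin 2) F) : Matrix (Fin 2) (Fin 2) F).mulVec v₁ = c₁ • v₁ ∧
        ((N⁻¹ * M : GL (Fin 2) F) : Matrix (Fin 2) (Fin 2) F).mulVec v₂ = c₂ • v₂) ∧
      2 * S.ncard = 3 * q - 5) ∧
    (Even q → ∃ S : Set (GL (Fin 2) F),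
      (∀ M ∈ S, ∀ N ∈ S, M ≠ N → ∀ c : F,
        (M : Matrix (Fin 2) (Fin 2) F) ≠ c • (N : Matrix (Fin 2) (Fin 2) F)) ∧
      (∀ M ∈ S, ∀ N ∈ S, ∃ (v₁ v₂ : Fin 2 → F) (c₁ c₂ : F),
        LinearIndependent F ![v₁, v₂] ∧
        ((N⁻¹ * M : GL (Fin 2) F) : Matrix (Fin 2) (Fin 2) F).mulVec v₁ = c₁ • v₁ ∧
        ((N⁻¹ * M : GL (Fin 2) F) : Matrix (Fin 2) (Fin 2) F).mulVec v₂ = c₂ • v₂) ∧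
      2 * S.ncard = 3 * q - 4) := by
  subst hF
  obtain ⟨S, hS, hcard⟩ := TwoIntersecting.exists_pairwise_hasDistinctEigenvalues F
  rw [Nat.card_eq_fintype_card] at hcard
  have hnonprop : ∀ M ∈ S, ∀ N ∈ S, M ≠ N → ∀ c : F,
      (M : Matrix (Fin 2) (Fin 2) F) ≠ c • (N : Matrix (Fin 2) (Fin 2) F) :=
    fun M hM N hN hne => (hS hM hN hne).ne_smul
  have heig := fun M (hM : M ∈ S) N (hN : N ∈ S) =>
    TwoIntersecting.exists_linearIndependent_inv_mul (hS hM hN)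
  refine ⟨fun hodd => ⟨S, hnonprop, heig, ?_⟩, fun heven => ⟨S, hnonprop, heig, ?_⟩⟩
  · have hchar : ringChar F ≠ 2 := fun h =>
      Nat.not_even_iff_odd.mpr hodd (Nat.even_iff.mpr (FiniteField.even_card_of_char_two h))
    rw [TwoIntersecting.ncard_units_inv_eq_self_of_ringChar_ne_two hchar] at hcard
    omega
  · have hchar : ringChar F = 2 := FiniteField.even_card_iff_char_two.mpr (Nat.even_iff.mp heven)
    rw [TwoIntersecting.ncard_units_inv_eq_self_of_ringChar_eq_two hchar] at hcard
    omega
end
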